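/- arXiv:math/9902044 — 2 statements merged into one kernel-verified Lean document; each statement's English description precedes it below -/
import Mathlib

section
/- Let N ≥ 1 be an integer and γ > 0 a real number. Then ∫_{ℝ^N} ∏_{1≤i<j≤N} |λ_j − λ_i|^{2γ} · exp(−(γ/2)·(λ_1² + ⋯ + λ_N²)) dλ = ( √(2π) · γ^{−((N−1)γ+1)/2} )^N · ∏_{j=0}^{N−1} Γ(1+(1+j)γ)/Γ(1+γ). -/
open MeasureTheory

/-!
Let `l ∈ ℝⁿ` interlace with `u ∈ ℝⁿ⁺¹`. The residues at the `u j` of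
`∏ i, (z - l i) / ∏ j, (z - u j)` are positive with sum `1`, and as `l` varies they parametrize the
open simplex; dually, the polynomial part and the residues of the reciprocal of this rational
function parametrize `ℝ × (0, ∞)ⁿ` as `u` varies. Both Jacobians are bordered Cauchy determinants,
so products of Gamma densities (and, in the dual case, a Gaussian) pull back to the Dixon-Anderson
density in `l` and to its Gaussian counterpart in `u`. If all exponents are `γ`, multiplying the
latter by the Mehta density at `l` and the former by the Mehta density at `u` gives the same kernel
on interlacing pairs. Integrating this kernel in either order yields a recursion in `n` for the
Mehta integral over the chamber of increasing vectors, and symmetrization gives the integral over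
the whole space.
-/

open Finset Lagrange Matrix Polynomial
open scoped ENNReal

section Determinants

variable {n : ℕ}

theorem det_eval_mul_det_vandermonde {R : Type*} [CommRing R] {p : Fin n → R[X]}
    (hp : ∀ k, (p k).natDegree < n) (x y : Fin n → R) :
    (of fun j k => (p k).eval (x j)).det * (vandermonde y).det =
      (of fun j k => (p k).eval (y j)).det * (vandermonde x).det := by
  have eval_eq : ∀ z : Fin n → R, (of fun j k => (p k).eval (z j)) =
      vandermonde z * of fun (i k : Fin n) => (p k).coeff i := fun z => by
    ext j k
    simp only [of_apply, eval_eq_sum_range' (hp k), mul_apply, vandermonde_apply,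
      Finset.sum_range]
    exact Finset.sum_congr rfl fun i _ => mul_comm _ _
  rw [eval_eq, eval_eq, det_mul, det_mul]
  ring

variable {K : Type*} [Field K]

/-- The Cauchy matrix `((u j - l i)⁻¹)` of `n + 1` points `u` against `n` points `l`, made square
by a first column of ones. Up to products of residues, its determinant is the Jacobian of both
changes of variables below. -/
def borderedCauchy (l : Fin n → K) (u : Fin (n + 1) → K) :
    Matrix (Fin (n + 1)) (Fin (n + 1)) K :=
  of fun j => Fin.cons 1 fun i => (u j - l i)⁻¹

theorem det_vandermonde_cons (a : K) (l : Fin n → K) :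
    (vandermonde (Fin.cons a l : Fin (n + 1) → K)).det =
      (∏ i, (l i - a)) * (vandermonde l).det := by
  simp only [det_vandermonde, Fin.prod_univ_succ, Fin.prod_Ioi_zero, Fin.prod_Ioi_succ,
    Fin.cons_zero, Fin.cons_succ]

/-- The polynomials `∏ i, (z - l i)` and `∏ k ≠ i, (z - l k)`, whose quotients by the first of them
are the columns of the bordered Cauchy matrix. -/
noncomputable def cauchyNumerator (l : Fin n → K) : Fin (n + 1) → K[X] :=
  Fin.cons (nodal univ l) fun i => nodal (univ.erase i) l

theorem natDegree_cauchyNumerator_lt (l : Fin n → K) (k : Fin (n + 1)) :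
    (cauchyNumerator l k).natDegree < n + 1 := by
  cases k using Fin.cases with
  | zero => simp [cauchyNumerator]
  | succ i => simp [cauchyNumerator]

theorem prod_eval_nodal_mul_det_borderedCauchy {l : Fin n → K} {u : Fin (n + 1) → K}
    (hlu : ∀ j i, u j ≠ l i) :
    (∏ j, (nodal univ l).eval (u j)) * (borderedCauchy l u).det =
      (of fun j k => (cauchyNumerator l k).eval (u j)).det := by
  rw [← det_mul_column]
  congr 1
  ext j k
  cases k using Fin.cases with
  | zero => simp [cauchyNumerator, borderedCauchy]
  | succ i =>
    have := sub_ne_zero.2 (hlu j i)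
    simp only [cauchyNumerator, borderedCauchy, of_apply, Fin.cons_succ,
      nodal_eq_mul_nodal_erase (mem_univ i), eval_mul, eval_sub, eval_X, eval_C]
    field_simp

theorem det_eval_cauchyNumerator_cons (a : K) (l : Fin n → K) :
    (of fun j k =>
        (cauchyNumerator l k).eval ((Fin.cons a l : Fin (n + 1) → K) j)).det =
      (nodal univ l).eval a * ∏ i, (nodal (univ.erase i) l).eval (l i) := by
  have diagonal_eq : (of fun j i => (nodal (univ.erase i) l).eval (l j)) =
      diagonal fun i => (nodal (univ.erase i) l).eval (l i) := by
    ext j i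
    rcases eq_or_ne j i with rfl | hji
    · simp
    · simp only [of_apply, diagonal_apply_ne _ hji]
      exact eval_nodal_at_node (mem_erase.2 ⟨hji, mem_univ j⟩)
  have minor_eq : (of fun j k => (cauchyNumerator l k).eval
      ((Fin.cons a l : Fin (n + 1) → K) j)).submatrix Fin.succ Fin.succ =
      of fun j i => (nodal (univ.erase i) l).eval (l j) := by
    ext j i
    simp [cauchyNumerator]
  rw [det_succ_column_zero, Fin.sum_univ_succ, Fin.succAbove_zero, minor_eq, diagonal_eq,
    det_diagonal]
  simp [cauchyNumerator, eval_nodal_at_node]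

theorem prod_abs_nodalWeight (x : Fin n → ℝ) :
    ∏ i, |nodalWeight univ x i| = ((vandermonde x).det ^ 2)⁻¹ := by
  have offDiag := prod_prod_Ioi_mul_eq_prod_prod_off_diag fun i j => |x j - x i|
  simp only [nodalWeight, abs_prod, abs_inv, prod_inv_distrib, det_vandermonde, ← compl_singleton]
  rw [← offDiag, ← sq_abs]
  simp only [abs_prod, abs_sub_comm, sq, prod_mul_distrib]

theorem abs_det_borderedCauchy {l : Fin n → ℝ} {u : Fin (n + 1) → ℝ}
    (hl : Function.Injective l) (hlu : ∀ j i, u j ≠ l i) :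
    (∏ j, |(nodal univ l).eval (u j)|) * |(borderedCauchy l u).det| =
      |(vandermonde l).det| * |(vandermonde u).det| := by
  have hV : |(vandermonde l).det| ≠ 0 := abs_ne_zero.2 (det_vandermonde_ne_zero_iff.2 hl)
  have hW : ∏ i, |(nodal (univ.erase i) l).eval (l i)| = |(vandermonde l).det| ^ 2 := by
    rw [← _root_.inv_inj, sq_abs, ← prod_abs_nodalWeight, ← prod_inv_distrib]
    simp only [nodalWeight_eq_eval_nodal_erase_inv, abs_inv]
  have hu₀ : ∏ i, |u 0 - l i| ≠ 0 :=
    prod_ne_zero_iff.2 fun i _ => abs_ne_zero.2 (sub_ne_zero.2 (hlu 0 i))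
  have key := congrArg abs
    (det_eval_mul_det_vandermonde (natDegree_cauchyNumerator_lt l) u (Fin.cons (u 0) l))
  rw [← prod_eval_nodal_mul_det_borderedCauchy hlu, det_eval_cauchyNumerator_cons,
    det_vandermonde_cons, abs_mul, abs_mul, abs_mul, abs_mul, abs_mul, abs_prod univ (fun i =>
    (nodal (univ.erase i) l).eval (l i)), hW, eval_nodal, abs_prod, abs_prod, abs_prod] at key
  simp only [abs_sub_comm _ (u 0)] at key
  apply mul_left_cancel₀ (mul_ne_zero hu₀ hV)
  linear_combination key

end Determinants

section Residues

variable {ι κ : Type*} [Fintype ι] [Fintype κ] [DecidableEq κ] {K : Type*} [Field K]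

/-- The residue of `∏ i, (z - x i) / ∏ k, (z - y k)` at its pole `z = y j`. -/
noncomputable def residue (x : ι → K) (y : κ → K) (j : κ) : K :=
  nodalWeight univ y j * (nodal univ x).eval (y j)

theorem nodalWeight_univ_ne_zero {y : κ → K} (hy : Function.Injective y) (j : κ) :
    nodalWeight univ y j ≠ 0 :=
  nodalWeight_ne_zero hy.injOn (mem_univ j)

end Residues

/-- Strict interlacing `u 0 < l 0 < u 1 < l 1 < ⋯ < l (n - 1) < u n`; for `n = 0` every `u`
qualifies. -/
def Interlaces {n : ℕ} (l : Fin n → ℝ) (u : Fin (n + 1) → ℝ) : Prop :=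
  ∀ i, u i.castSucc < l i ∧ l i < u i.succ

namespace Interlaces

variable {n : ℕ} {l : Fin n → ℝ} {u : Fin (n + 1) → ℝ}

theorem strictMono_right (h : Interlaces l u) : StrictMono u :=
  Fin.strictMono_iff_lt_succ.2 fun i => (h i).1.trans (h i).2

theorem lt_of_castSucc_lt (h : Interlaces l u) {i : Fin n} {j : Fin (n + 1)}
    (hij : i.castSucc < j) : l i < u j :=
  (h i).2.trans_le (h.strictMono_right.monotone (Fin.castSucc_lt_iff_succ_le.1 hij))

theorem lt_of_le_castSucc (h : Interlaces l u) {i : Fin n} {j : Fin (n + 1)}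
    (hij : j ≤ i.castSucc) : u j < l i :=
  (h.strictMono_right.monotone hij).trans_lt (h i).1

theorem strictMono_left (h : Interlaces l u) : StrictMono l := fun _ j hij =>
  (h.lt_of_castSucc_lt (Fin.castSucc_lt_castSucc_iff.2 hij)).trans (h j).1

theorem ne (h : Interlaces l u) (j : Fin (n + 1)) (i : Fin n) : u j ≠ l i :=
  (lt_or_ge i.castSucc j).elim (fun hij => (h.lt_of_castSucc_lt hij).ne')
    fun hij => (h.lt_of_le_castSucc hij).ne

theorem residue_left_pos (h : Interlaces l u) (j : Fin (n + 1)) : 0 < residue l u j := by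
  rw [residue, nodalWeight, ← compl_singleton, ← Fin.image_succAbove_univ,
    prod_image Fin.succAbove_right_injective.injOn, eval_nodal, ← prod_mul_distrib]
  refine prod_pos fun i _ => ?_
  rcases lt_or_ge i.castSucc j with hij | hij
  · rw [Fin.succAbove_of_castSucc_lt _ _ hij]
    exact mul_pos (inv_pos.2 (sub_pos.2 (h.strictMono_right hij)))
      (sub_pos.2 (h.lt_of_castSucc_lt hij))
  · rw [Fin.succAbove_of_le_castSucc _ _ hij]
    exact mul_pos_of_neg_of_neg (inv_neg''.2 (sub_neg.2 ((h.lt_of_le_castSucc hij).trans (h i).2)))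
      (sub_neg.2 (h.lt_of_le_castSucc hij))

theorem residue_right_neg (h : Interlaces l u) (i : Fin n) : residue u l i < 0 := by
  have factor : residue u l i = (l i - u i.castSucc) * (l i - u i.succ) *
      ∏ k ∈ univ.erase i, (l i - l k)⁻¹ * (l i - u (i.castSucc.succAbove k)) := by
    rw [residue, nodalWeight, eval_nodal, Fin.prod_univ_succAbove _ i.castSucc,
      ← mul_prod_erase _ _ (mem_univ i), Fin.succAbove_castSucc_self, prod_mul_distrib]
    ring
  rw [factor]
  refine mul_neg_of_neg_of_pos (mul_neg_of_pos_of_neg (sub_pos.2 (h i).1) (sub_neg.2 (h i).2))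
    (prod_pos fun k hk => ?_)
  rcases (ne_of_mem_erase hk).lt_or_gt with hki | hik
  · rw [Fin.succAbove_of_castSucc_lt _ _ (Fin.castSucc_lt_castSucc_iff.2 hki)]
    exact mul_pos (inv_pos.2 (sub_pos.2 (h.strictMono_left hki)))
      (sub_pos.2 (h.lt_of_le_castSucc (Fin.castSucc_le_castSucc_iff.2 hki.le)))
  · rw [Fin.succAbove_of_lt_succ _ _ (Fin.castSucc_lt_succ_iff.2 hik.le)]
    exact mul_pos_of_neg_of_neg (inv_neg''.2 (sub_neg.2 (h.strictMono_left hik)))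
      (sub_neg.2 ((h.strictMono_left hik).trans (h k).2))

theorem eval_nodal_mul_eval_nodal_neg (h : Interlaces l u) (i : Fin n) :
    (nodal univ l).eval (u i.castSucc) * (nodal univ l).eval (u i.succ) < 0 := by
  rw [eval_nodal, eval_nodal, ← prod_mul_distrib, ← mul_prod_erase _ _ (mem_univ i)]
  refine mul_neg_of_neg_of_pos (mul_neg_of_neg_of_pos (sub_neg.2 (h i).1) (sub_pos.2 (h i).2))
    (prod_pos fun k hk => ?_)
  rcases (ne_of_mem_erase hk).lt_or_gt with hki | hik
  · have hlt : l k < u i.castSucc := h.lt_of_castSucc_lt (Fin.castSucc_lt_castSucc_iff.2 hki)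
    exact mul_pos (sub_pos.2 hlt) (sub_pos.2 (hlt.trans ((h i).1.trans (h i).2)))
  · have hlt : u i.succ < l k := h.lt_of_le_castSucc (Fin.succ_le_castSucc_iff.2 hik)
    exact mul_pos_of_neg_of_neg (sub_neg.2 (((h i).1.trans (h i).2).trans hlt)) (sub_neg.2 hlt)

theorem exists_interlaces_zeros {f : ℝ → ℝ} (h : Interlaces l u) (hf : Continuous f)
    (hpos : ∀ j, 0 < f (u j) * (nodal univ l).eval (u j)) :
    ∃ z, Interlaces z u ∧ ∀ i, f (z i) = 0 := by
  have sign_change : ∀ i : Fin n, f (u i.castSucc) * f (u i.succ) < 0 := fun i => by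
    have := mul_pos (hpos i.castSucc) (hpos i.succ)
    rw [mul_mul_mul_comm] at this
    exact neg_of_mul_pos_left this (h.eval_nodal_mul_eval_nodal_neg i).le
  have hzero : ∀ i : Fin n, ∃ z ∈ Set.Ioo (u i.castSucc) (u i.succ), f z = 0 := fun i => by
    have hlt : u i.castSucc ≤ u i.succ := (h.strictMono_right i.castSucc_lt_succ).le
    rcases mul_neg_iff.1 (sign_change i) with ⟨ha, hb⟩ | ⟨ha, hb⟩
    · exact intermediate_value_Ioo' hlt hf.continuousOn ⟨hb, ha⟩
    · exact intermediate_value_Ioo hlt hf.continuousOn ⟨ha, hb⟩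
  choose z hz hfz using hzero
  exact ⟨z, hz, hfz⟩

end Interlaces

theorem exists_interlaces_right {n : ℕ} {u : Fin (n + 1) → ℝ} (hu : StrictMono u) :
    ∃ l, Interlaces l u := by
  choose l hl using fun i : Fin n => exists_between (hu i.castSucc_lt_succ)
  exact ⟨l, hl⟩

theorem exists_interlaces_left {n : ℕ} {l : Fin n → ℝ} (hl : StrictMono l) :
    ∃ u, Interlaces l u := by
  have hgap : ∀ j : Fin (n + 1), ∃ y,
      (∀ i, i.castSucc < j → l i < y) ∧ ∀ i, j ≤ i.castSucc → y < l i := fun j => by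
    obtain ⟨y, hlo, hhi⟩ := Order.exists_between_finsets
      (image l {i | i.castSucc < j}) (image l {i | j ≤ i.castSucc}) <| by
        simp only [forall_mem_image, mem_filter, mem_univ, true_and]
        exact fun i hij k hjk => hl (Fin.castSucc_lt_castSucc_iff.1 (hij.trans_le hjk))
    simp only [forall_mem_image, mem_filter, mem_univ, true_and] at hlo hhi
    exact ⟨y, @hlo, @hhi⟩
  choose u hlt hgt using hgap
  exact ⟨u, fun i => ⟨hgt _ i le_rfl, hlt _ i i.castSucc_lt_succ⟩⟩

section Nodal

variable {ι : Type*} [Fintype ι] {K : Type*} [Field K] {n : ℕ}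

theorem eq_nodal_of_monic {P : K[X]} (hP : P.Monic) (hdeg : P.natDegree = Fintype.card ι)
    {x : ι → K} (hx : Function.Injective x) (hPx : ∀ i, P.eval (x i) = 0) :
    P = nodal univ x := by
  have hPdeg : P.degree = (nodal univ x).degree := by
    rw [degree_nodal, degree_eq_natDegree hP.ne_zero, hdeg, card_univ]
  refine eq_of_degree_sub_lt_of_eval_index_eq univ hx.injOn ?_ fun i _ => ?_
  · refine (degree_sub_lt_left hPdeg hP.ne_zero ?_).trans_eq ?_
    · rw [hP.leadingCoeff, nodal_monic.leadingCoeff]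
    · rw [hPdeg, degree_nodal]
  · rw [hPx, eval_nodal_at_node (mem_univ i)]

theorem range_eq_of_nodal_eq {x y : ι → K} (h : nodal univ x = nodal univ y) :
    Set.range x = Set.range y := by
  have range_eq : ∀ z : ι → K, Set.range z = {t | (nodal univ z).eval t = 0} := fun z => by
    ext t
    simp only [Set.mem_range, Set.mem_ofPred_eq, eval_nodal, prod_eq_zero_iff, mem_univ, true_and,
      sub_eq_zero, @eq_comm _ t]
  rw [range_eq, range_eq, h]

theorem coeff_nodal_pred (x : Fin (n + 1) → K) : (nodal univ x).coeff n = -∑ i, x i := by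
  rw [← prod_X_sub_C_nextCoeff, nextCoeff, ← nodal_eq, natDegree_nodal, card_univ, Fintype.card_fin,
    if_neg n.succ_ne_zero, Nat.add_sub_cancel]

theorem degree_nodal_sub_nodal_lt_iff {x y : Fin (n + 1) → K} :
    (nodal univ x - nodal univ y).degree < n ↔ ∑ i, x i = ∑ i, y i := by
  have hcoeff : ∀ m > n, (nodal univ x - nodal univ y).coeff m = 0 := by
    refine fun m hm => (degree_lt_iff_coeff_zero _ (n + 1)).1 ?_ m hm
    refine (degree_sub_lt_left ?_ nodal_ne_zero ?_).trans_eq ?_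
    · rw [degree_nodal, degree_nodal]
    · rw [nodal_monic.leadingCoeff, nodal_monic.leadingCoeff]
    · rw [degree_nodal, card_univ, Fintype.card_fin]
  rw [degree_lt_iff_coeff_zero]
  trans (nodal univ x - nodal univ y).coeff n = 0
  · exact ⟨fun h => h n le_rfl, fun h m hm => hm.eq_or_lt.elim (fun e => e ▸ h) (hcoeff m)⟩
  · rw [coeff_sub, coeff_nodal_pred, coeff_nodal_pred, sub_eq_zero, neg_inj]

theorem nodal_cons (a : K) (x : Fin n → K) :
    nodal univ (Fin.cons a x : Fin (n + 1) → K) = (X - C a) * nodal univ x := by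
  simp only [nodal_eq, Fin.prod_univ_succ, Fin.cons_zero, Fin.cons_succ]

theorem two_mul_coeff_nodal (x : Fin (n + 2) → K) :
    2 * (nodal univ x).coeff n = (∑ i, x i) ^ 2 - ∑ i, x i ^ 2 := by
  induction n with
  | zero =>
    simp only [Nat.reduceAdd, nodal_eq, Fin.prod_univ_two, Fin.sum_univ_two, mul_coeff_zero,
      coeff_sub, coeff_X_zero, coeff_C_zero]
    ring
  | succ n ih =>
    have hcoeff : (nodal univ x).coeff (n + 1) =
        (nodal univ (Fin.tail x)).coeff n + x 0 * ∑ i, Fin.tail x i := by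
      rw [← Fin.cons_self_tail x, nodal_cons, sub_mul, coeff_sub, coeff_X_mul, coeff_C_mul,
        coeff_nodal_pred]
      simp
    rw [hcoeff, mul_add, ih, Fin.sum_univ_succ x, Fin.sum_univ_succ fun i => x i ^ 2]
    simp only [Fin.tail]
    ring

end Nodal

section ResidueIdentities

variable {ι κ : Type*} [Fintype ι] [Fintype κ] [DecidableEq κ] {K : Type*} [Field K]

theorem sum_nodalWeight_mul_eval {y : κ → K} (hy : Function.Injective y) {P : K[X]}
    (hP : P.degree < Fintype.card κ) :
    ∑ j, nodalWeight univ y j * P.eval (y j) = P.coeff (Fintype.card κ - 1) := by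
  rw [← card_univ] at hP ⊢
  rw [Lagrange.coeff_eq_sum hy.injOn hP]
  simp only [nodalWeight, prod_inv_distrib, inv_mul_eq_div]

theorem sum_residue {n : ℕ} (x : Fin n → K) {y : Fin (n + 1) → K} (hy : Function.Injective y) :
    ∑ j, residue x y j = 1 := by
  have hdeg : (nodal univ x).degree < Fintype.card (Fin (n + 1)) := by
    rw [degree_nodal, card_univ, Fintype.card_fin, Fintype.card_fin]
    exact_mod_cast n.lt_succ_self
  simp only [residue, sum_nodalWeight_mul_eval hy hdeg]
  simpa using (nodal_monic (s := univ) (v := x)).coeff_natDegree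

theorem two_mul_sum_residue {n : ℕ} {l : Fin n → K} (hl : Function.Injective l)
    (u : Fin (n + 1) → K) :
    2 * ∑ i, residue u l i =
      (∑ j, u j - ∑ i, l i) ^ 2 + ∑ i, l i ^ 2 - ∑ j, u j ^ 2 := by
  cases n with
  | zero => simp
  | succ n =>
    set a := ∑ j, u j - ∑ i, l i with ha
    have hdeg : (nodal univ u - nodal univ (Fin.cons a l : Fin (n + 2) → K)).degree <
        Fintype.card (Fin (n + 1)) := by
      rw [Fintype.card_fin, degree_nodal_sub_nodal_lt_iff, Fin.sum_cons, ha, sub_add_cancel]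
    have residue_eq : ∀ i, residue u l i = nodalWeight univ l i *
        (nodal univ u - nodal univ (Fin.cons a l : Fin (n + 2) → K)).eval (l i) := fun i => by
      rw [nodal_cons, eval_sub, eval_mul, eval_nodal_at_node (mem_univ i), mul_zero, sub_zero,
        residue]
    simp only [residue_eq]
    rw [sum_nodalWeight_mul_eval hl hdeg, Fintype.card_fin, Nat.add_sub_cancel, coeff_sub, mul_sub,
      two_mul_coeff_nodal, two_mul_coeff_nodal]
    rw [Fin.sum_univ_succ fun i => (Fin.cons a l : Fin (n + 2) → K) i ^ 2, Fin.sum_cons]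
    simp only [Fin.cons_zero, Fin.cons_succ, ha]
    ring

theorem div_nodalWeight_mul_eval_nodal {x : ι → K} {y : κ → K} {j : κ}
    (hj : nodalWeight univ y j ≠ 0) (c : K) :
    c / nodalWeight univ y j * (nodal univ x).eval (y j) =
      c * residue x y j / nodalWeight univ y j ^ 2 := by
  rw [residue]
  field_simp

theorem eval_nodal_eq_of_residue_eq {x x' : ι → K} {y : κ → K} (hy : Function.Injective y)
    (h : residue x y = residue x' y) (j : κ) :
    (nodal univ x).eval (y j) = (nodal univ x').eval (y j) :=
  mul_left_cancel₀ (nodalWeight_univ_ne_zero hy j) (congrFun h j)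

end ResidueIdentities

section Parametrizations

variable {n : ℕ}

theorem eq_of_nodal_eq {x y : Fin n → ℝ} (hx : StrictMono x) (hy : StrictMono y)
    (h : nodal univ x = nodal univ y) : x = y :=
  (hx.range_inj hy).1 (range_eq_of_nodal_eq h)

theorem residue_left_injOn {u : Fin (n + 1) → ℝ} :
    Set.InjOn (fun l => residue l u) {l | Interlaces l u} := fun l hl l' hl' h => by
  refine eq_of_nodal_eq hl.strictMono_left hl'.strictMono_left ?_
  refine eq_of_degrees_lt_of_eval_index_eq univ hl.strictMono_right.injective.injOn ?_ ?_
    fun j _ => eval_nodal_eq_of_residue_eq hl.strictMono_right.injective h j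
  all_goals
    rw [degree_nodal, card_univ, card_univ, Fintype.card_fin, Fintype.card_fin]
    exact_mod_cast n.lt_succ_self

theorem residue_right_injOn {l : Fin n → ℝ} :
    Set.InjOn (fun u => (∑ j, u j, residue u l)) {u | Interlaces l u} := fun u hu u' hu' h => by
  obtain ⟨hsum, hres⟩ := Prod.ext_iff.1 h
  refine eq_of_nodal_eq hu.strictMono_right hu'.strictMono_right ?_
  refine eq_of_degree_sub_lt_of_eval_index_eq univ hu.strictMono_left.injective.injOn ?_
    fun i _ => eval_nodal_eq_of_residue_eq hu.strictMono_left.injective hres i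
  rw [card_univ, Fintype.card_fin]
  exact degree_nodal_sub_nodal_lt_iff.2 hsum

theorem exists_residue_left_eq {u : Fin (n + 1) → ℝ} (hu : StrictMono u) {p : Fin (n + 1) → ℝ}
    (hp : ∀ j, 0 < p j) (hsum : ∑ j, p j = 1) : ∃ l, Interlaces l u ∧ residue l u = p := by
  obtain ⟨m, hm⟩ := exists_interlaces_right hu
  have hw : ∀ j, nodalWeight univ u j ≠ 0 := nodalWeight_univ_ne_zero hu.injective
  set P := interpolate univ u fun j => p j / nodalWeight univ u j
  have eval_P : ∀ j, P.eval (u j) = p j / nodalWeight univ u j := fun j =>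
    eval_interpolate_at_node _ hu.injective.injOn (mem_univ j)
  have degree_lt : P.degree < Fintype.card (Fin (n + 1)) := by
    rw [← card_univ]
    exact degree_interpolate_lt _ hu.injective.injOn
  have coeff_P : P.coeff n = 1 := by
    have := sum_nodalWeight_mul_eval hu.injective degree_lt
    simp only [eval_P, mul_div_cancel₀ _ (hw _), hsum] at this
    simpa using this.symm
  rw [Fintype.card_fin] at degree_lt
  have natDegree_P : P.natDegree = n :=
    natDegree_eq_of_le_of_coeff_ne_zero (natDegree_le_of_degree_le (Order.lt_succ_iff.1 degree_lt))
      (coeff_P ▸ one_ne_zero)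
  obtain ⟨l, hl, hPl⟩ := hm.exists_interlaces_zeros P.continuous fun j => by
    rw [eval_P, div_nodalWeight_mul_eval_nodal (hw j)]
    exact div_pos (mul_pos (hp j) (hm.residue_left_pos j)) (sq_pos_of_ne_zero (hw j))
  have hP : P = nodal univ l :=
    eq_nodal_of_monic (by rw [Monic, leadingCoeff, natDegree_P, coeff_P])
      (natDegree_P.trans (Fintype.card_fin n).symm) hl.strictMono_left.injective hPl
  refine ⟨l, hl, funext fun j => ?_⟩
  rw [residue, ← hP, eval_P, mul_div_cancel₀ _ (hw j)]

theorem eventually_eval_pos_of_monic {P : ℝ[X]} (hP : P.Monic) :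
    ∀ᶠ x in Filter.atTop, 0 < P.eval x := by
  rcases Nat.eq_zero_or_pos P.natDegree with h0 | h0
  · simp [hP.natDegree_eq_zero.1 h0]
  · exact (P.tendsto_atTop_of_leadingCoeff_nonneg (natDegree_pos_iff_degree_pos.1 h0)
      (hP.leadingCoeff ▸ zero_le_one)).eventually_gt_atTop 0

theorem eventually_eval_mul_eval_pos {P Q : ℝ[X]} (hP : P.Monic) (hQ : Q.Monic)
    (hPQ : P.natDegree = Q.natDegree) : ∀ᶠ x in Filter.atTop,
      0 < P.eval x * Q.eval x ∧ 0 < P.eval (-x) * Q.eval (-x) := by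
  filter_upwards [eventually_eval_pos_of_monic hP, eventually_eval_pos_of_monic hQ,
    eventually_eval_pos_of_monic hP.neg_one_pow_natDegree_mul_comp_neg_X,
    eventually_eval_pos_of_monic hQ.neg_one_pow_natDegree_mul_comp_neg_X] with x hPx hQx hPx' hQx'
  refine ⟨mul_pos hPx hQx, ?_⟩
  have := mul_pos hPx' hQx'
  simp only [eval_mul, eval_pow, eval_neg, eval_one, eval_comp, eval_X, hPQ] at this
  rwa [mul_mul_mul_comm, ← mul_pow, neg_one_mul, neg_neg, one_pow, one_mul] at this

theorem interlaces_cons_snoc_iff {l : Fin n → ℝ} {m : Fin (n + 1) → ℝ} {a b : ℝ} :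
    Interlaces m (Fin.cons a (Fin.snoc (α := fun _ => ℝ) l b) : Fin (n + 2) → ℝ) ↔
      Interlaces l m ∧ a < m 0 ∧ m (Fin.last n) < b := by
  simp only [Interlaces, forall_and, Fin.cons_succ]
  rw [Fin.forall_fin_succ, Fin.forall_fin_succ']
  simp only [Fin.castSucc_zero, Fin.cons_zero, ← Fin.succ_castSucc, Fin.cons_succ,
    Fin.snoc_castSucc, Fin.snoc_last]
  tauto

theorem Interlaces.exists_zeros_of_monic {l : Fin n → ℝ} {m : Fin (n + 1) → ℝ}
    (h : Interlaces l m) {P : ℝ[X]} (hP : P.Monic) (hdeg : P.natDegree = n + 1)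
    (hpos : ∀ i, 0 < P.eval (l i) * (nodal univ m).eval (l i)) :
    ∃ z, Interlaces l z ∧ ∀ j, P.eval (z j) = 0 := by
  have hdeg' : P.natDegree = (nodal univ m).natDegree := by
    rw [hdeg, natDegree_nodal, card_univ, Fintype.card_fin]
  obtain ⟨b, ⟨hb, hb'⟩, hmb, hbm⟩ := ((eventually_eval_mul_eval_pos hP nodal_monic hdeg').and
    ((Filter.eventually_gt_atTop (m (Fin.last n))).and
      (Filter.eventually_gt_atTop (-m 0)))).exists
  obtain ⟨z, hz, hPz⟩ := (interlaces_cons_snoc_iff.2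
    ⟨h, neg_lt.1 hbm, hmb⟩).exists_interlaces_zeros P.continuous fun j => by
      cases j using Fin.cases with
      | zero => exact hb'
      | succ j =>
        rw [Fin.cons_succ]
        cases j using Fin.lastCases with
        | last => rwa [Fin.snoc_last]
        | cast i => rw [Fin.snoc_castSucc]; exact hpos i
  exact ⟨z, (interlaces_cons_snoc_iff.1 hz).1, hPz⟩

theorem exists_residue_right_eq {l : Fin n → ℝ} (hl : StrictMono l) (a : ℝ) {q : Fin n → ℝ}
    (hq : ∀ i, q i < 0) : ∃ u, Interlaces l u ∧ ∑ j, u j = a ∧ residue u l = q := by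
  obtain ⟨m, hm⟩ := exists_interlaces_left hl
  have hw : ∀ i, nodalWeight univ l i ≠ 0 := nodalWeight_univ_ne_zero hl.injective
  set Q := interpolate univ l fun i => q i / nodalWeight univ l i
  have eval_Q : ∀ i, Q.eval (l i) = q i / nodalWeight univ l i := fun i =>
    eval_interpolate_at_node _ hl.injective.injOn (mem_univ i)
  have degree_Q : Q.degree < n := by
    simpa only [card_univ, Fintype.card_fin] using
      degree_interpolate_lt (s := univ) (fun i => q i / nodalWeight univ l i) hl.injective.injOn
  set R := nodal univ (Fin.cons (a - ∑ i, l i) l : Fin (n + 1) → ℝ) with R_def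
  have hlt : Q.degree < R.degree := degree_Q.trans <| by
    rw [degree_nodal, card_univ, Fintype.card_fin]
    exact_mod_cast n.lt_succ_self
  have natDegree_P : (R + Q).natDegree = n + 1 := by
    rw [natDegree_add_eq_left_of_degree_lt hlt, natDegree_nodal, card_univ, Fintype.card_fin]
  have monic_P : (R + Q).Monic := nodal_monic.add_of_left hlt
  have eval_P : ∀ i, (R + Q).eval (l i) = q i / nodalWeight univ l i := fun i => by
    rw [R_def, nodal_cons, eval_add, eval_mul, eval_nodal_at_node (mem_univ i), mul_zero, zero_add,
      eval_Q]
  obtain ⟨z, hz, hPz⟩ := hm.exists_zeros_of_monic monic_P natDegree_P fun i => by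
    rw [eval_P, div_nodalWeight_mul_eval_nodal (hw i)]
    exact div_pos (mul_pos_of_neg_of_neg (hq i) (hm.residue_right_neg i))
      (sq_pos_of_ne_zero (hw i))
  have hP : R + Q = nodal univ z :=
    eq_nodal_of_monic monic_P (natDegree_P.trans (Fintype.card_fin _).symm)
      hz.strictMono_right.injective hPz
  refine ⟨z, hz, ?_, funext fun i => ?_⟩
  · have := (degree_nodal_sub_nodal_lt_iff (x := z) (y := Fin.cons (a - ∑ i, l i) l)).1 <| by
      rwa [← hP, ← R_def, add_sub_cancel_left]
    rwa [Fin.sum_cons, sub_add_cancel] at this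
  · rw [residue, ← hP, eval_P, mul_div_cancel₀ _ (hw i)]

end Parametrizations

section Jacobians

theorem det_vandermonde_pos {n : ℕ} {x : Fin n → ℝ} (hx : StrictMono x) :
    0 < (vandermonde x).det := by
  rw [det_vandermonde]
  exact prod_pos fun i _ => prod_pos fun j hj => sub_pos.2 (hx (mem_Ioi.1 hj))

theorem prod_abs_residue {ι : Type*} [Fintype ι] {n : ℕ} (x : ι → ℝ) (y : Fin n → ℝ) :
    ∏ j, |residue x y j| =
      (∏ j, |(nodal univ x).eval (y j)|) / (vandermonde y).det ^ 2 := by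
  simp only [residue, abs_mul, prod_mul_distrib, prod_abs_nodalWeight]
  rw [mul_comm, div_eq_mul_inv]

theorem prod_abs_eval_nodal_comm {ι κ : Type*} [Fintype ι] [Fintype κ] (x : ι → ℝ) (y : κ → ℝ) :
    ∏ j, |(nodal univ x).eval (y j)| = ∏ i, |(nodal univ y).eval (x i)| := by
  simp only [eval_nodal, abs_prod]
  rw [prod_comm]
  simp only [abs_sub_comm]

variable {n : ℕ} {l : Fin n → ℝ} {u : Fin (n + 1) → ℝ}

theorem Interlaces.prod_abs_residue_left_mul_abs_det (h : Interlaces l u) :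
    (∏ j, |residue l u j|) * |(borderedCauchy l u).det| =
      (vandermonde l).det / (vandermonde u).det := by
  have hl := det_vandermonde_pos h.strictMono_left
  have hu := det_vandermonde_pos h.strictMono_right
  have := abs_det_borderedCauchy h.strictMono_left.injective h.ne
  rw [abs_of_pos hl, abs_of_pos hu] at this
  rw [prod_abs_residue, div_mul_eq_mul_div, this]
  field_simp

theorem Interlaces.prod_abs_residue_right_mul_abs_det (h : Interlaces l u) :
    (∏ i, |residue u l i|) * |(borderedCauchy l u).det| =
      (vandermonde u).det / (vandermonde l).det := by
  have hl := det_vandermonde_pos h.strictMono_left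
  have hu := det_vandermonde_pos h.strictMono_right
  have := abs_det_borderedCauchy h.strictMono_left.injective h.ne
  rw [abs_of_pos hl, abs_of_pos hu, prod_abs_eval_nodal_comm] at this
  rw [prod_abs_residue, div_mul_eq_mul_div, this]
  field_simp

theorem hasFDerivAt_residue {ι κ : Type*} [Fintype ι] [Fintype κ] [DecidableEq κ]
    {x : ι → ℝ} {y : κ → ℝ} {j : κ} (h : ∀ i, x i ≠ y j) :
    HasFDerivAt (fun x : ι → ℝ => residue x y j)
      (∑ i, (residue x y j * (x i - y j)⁻¹) • ContinuousLinearMap.proj (R := ℝ) (φ := fun _ => ℝ) i)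
      x := by
  classical
  simp only [residue, eval_nodal]
  have hsub : ∀ i, HasFDerivAt (fun x : ι → ℝ => y j - x i)
      (-ContinuousLinearMap.proj (R := ℝ) (φ := fun _ : ι => ℝ) i) x := fun i =>
    (hasFDerivAt_apply i x).const_sub (y j)
  refine ((HasFDerivAt.finsetProd fun i _ => hsub i).const_mul _).congr_fderiv ?_
  rw [smul_sum]
  refine sum_congr rfl fun i _ => ?_
  have := sub_ne_zero.2 (h i)
  rw [smul_neg, smul_neg, smul_smul, ← neg_smul, ← mul_prod_erase univ _ (mem_univ i)]
  congr 1
  field_simp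
  ring

theorem lintegral_image_eq_lintegral_abs_det_mul {ι : Type*} [Fintype ι] [DecidableEq ι]
    {s : Set (ι → ℝ)} (hs : MeasurableSet s) {f : (ι → ℝ) → ι → ℝ} {J : (ι → ℝ) → Matrix ι ι ℝ}
    (hf : ∀ x ∈ s, ∀ i, HasFDerivAt (fun x => f x i)
      (∑ j, J x i j • ContinuousLinearMap.proj (R := ℝ) (φ := fun _ => ℝ) j) x)
    (hinj : Set.InjOn f s) (g : (ι → ℝ) → ℝ≥0∞) :
    ∫⁻ x in f '' s, g x = ∫⁻ x in s, ENNReal.ofReal |(J x).det| * g (f x) := by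
  have hfderiv : ∀ x ∈ s, HasFDerivWithinAt f (Matrix.toLin' (J x)).toContinuousLinearMap s x :=
    fun x hx => by
      refine (hasFDerivAt_pi'.2 fun i => (hf x hx i).congr_fderiv ?_).hasFDerivWithinAt
      ext v
      simp [Matrix.mulVec, dotProduct]
  rw [lintegral_image_eq_lintegral_abs_det_fderiv_mul volume hs hfderiv hinj]
  simp only [LinearMap.det_toContinuousLinearMap, LinearMap.det_toLin']

end Jacobians

section ResidueMaps

variable {n : ℕ}

/-- The map `(t, l) ↦ (t * residue l u j)_j`, which for fixed `u` carries pairs of a `t > 0` and an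
`l` interlacing with `u` to the positive orthant. -/
noncomputable def scaledResidues (u y : Fin (n + 1) → ℝ) : Fin (n + 1) → ℝ :=
  fun j => y 0 * residue (Fin.tail y) u j

/-- The map `u ↦ (∑ j, u j - ∑ i, l i, (-residue u l i)_i)`, the coefficients of the expansion of
`∏ j, (z - u j) / ∏ i, (z - l i) = z - a - ∑ i, q i / (z - l i)`. -/
noncomputable def reciprocalCoeffs (l : Fin n → ℝ) (u : Fin (n + 1) → ℝ) : Fin (n + 1) → ℝ :=
  Fin.cons (∑ j, u j - ∑ i, l i) fun i => -residue u l i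

theorem measurableSet_interlaces {α : Type*} [MeasurableSpace α] {f : α → Fin n → ℝ}
    {g : α → Fin (n + 1) → ℝ} (hf : Measurable f) (hg : Measurable g) :
    MeasurableSet {a | Interlaces (f a) (g a)} := by
  have hf' := measurable_pi_iff.1 hf
  have hg' := measurable_pi_iff.1 hg
  simp only [Interlaces, Set.ofPred_forall]
  exact MeasurableSet.iInter fun i =>
    (measurableSet_lt (hg' _) (hf' i)).inter (measurableSet_lt (hf' i) (hg' _))

theorem measurableSet_pos_and_interlaces_tail (u : Fin (n + 1) → ℝ) :
    MeasurableSet {y : Fin (n + 1) → ℝ | 0 < y 0 ∧ Interlaces (Fin.tail y) u} :=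
  (measurableSet_lt measurable_const (measurable_pi_apply 0)).inter
    (measurableSet_interlaces (measurable_pi_lambda _ fun i => measurable_pi_apply i.succ)
      measurable_const)

theorem sum_scaledResidues {u : Fin (n + 1) → ℝ} (hu : Function.Injective u)
    (y : Fin (n + 1) → ℝ) : ∑ j, scaledResidues u y j = y 0 := by
  simp only [scaledResidues, ← mul_sum, sum_residue _ hu, mul_one]

theorem injOn_scaledResidues (u : Fin (n + 1) → ℝ) :
    Set.InjOn (scaledResidues u) {y | 0 < y 0 ∧ Interlaces (Fin.tail y) u} := by
  rintro y ⟨hy₀, hy⟩ y' ⟨-, hy'⟩ h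
  have h₀ : y 0 = y' 0 := by
    rw [← sum_scaledResidues hy.strictMono_right.injective y, h,
      sum_scaledResidues hy.strictMono_right.injective]
  have htail : Fin.tail y = Fin.tail y' := residue_left_injOn hy hy' <| funext fun j => by
    have := congrFun h j
    rwa [scaledResidues, scaledResidues, ← h₀, mul_right_inj' hy₀.ne'] at this
  rw [← Fin.cons_self_tail y, h₀, htail, Fin.cons_self_tail]

theorem image_scaledResidues {u : Fin (n + 1) → ℝ} (hu : StrictMono u) :
    scaledResidues u '' {y | 0 < y 0 ∧ Interlaces (Fin.tail y) u} =
      Set.univ.pi fun _ => Set.Ioi 0 := by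
  ext z
  simp only [Set.mem_image, Set.mem_ofPred_eq, Set.mem_univ_pi, Set.mem_Ioi]
  constructor
  · rintro ⟨y, ⟨hy₀, hy⟩, rfl⟩ j
    exact mul_pos hy₀ (hy.residue_left_pos j)
  · intro hz
    have hsum : 0 < ∑ j, z j := sum_pos (fun j _ => hz j) univ_nonempty
    obtain ⟨l, hl, hres⟩ := exists_residue_left_eq hu (p := fun j => z j / ∑ k, z k)
      (fun j => div_pos (hz j) hsum) (by rw [← sum_div, div_self hsum.ne'])
    refine ⟨Fin.cons (∑ j, z j) l, ⟨hsum, hl⟩, funext fun j => ?_⟩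
    rw [scaledResidues, Fin.cons_zero, Fin.tail_cons, hres, mul_div_cancel₀ _ hsum.ne']

/-- The Jacobian matrix of `scaledResidues u`. -/
noncomputable def scaledResiduesJacobian (u y : Fin (n + 1) → ℝ) :
    Matrix (Fin (n + 1)) (Fin (n + 1)) ℝ :=
  diagonal (residue (Fin.tail y) u) * borderedCauchy (Fin.tail y) u *
    diagonal (Fin.cons 1 fun _ => -y 0)

theorem hasFDerivAt_scaledResidues {u y : Fin (n + 1) → ℝ} (h : Interlaces (Fin.tail y) u)
    (j : Fin (n + 1)) : HasFDerivAt (fun y => scaledResidues u y j)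
      (∑ k, scaledResiduesJacobian u y j k •
        ContinuousLinearMap.proj (R := ℝ) (φ := fun _ => ℝ) k) y := by
  have htail : HasFDerivAt (fun y : Fin (n + 1) → ℝ => Fin.tail y)
      (ContinuousLinearMap.pi fun i : Fin n =>
        ContinuousLinearMap.proj (R := ℝ) (φ := fun _ : Fin (n + 1) => ℝ) i.succ) y :=
    (ContinuousLinearMap.pi fun i : Fin n =>
      ContinuousLinearMap.proj (R := ℝ) (φ := fun _ : Fin (n + 1) => ℝ) i.succ).hasFDerivAt
  refine ((hasFDerivAt_apply 0 y).mul
    ((hasFDerivAt_residue fun i => (h.ne j i).symm).comp y htail)).congr_fderiv ?_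
  ext v
  have sub_inv : ∀ i, (Fin.tail y i - u j)⁻¹ = -(u j - Fin.tail y i)⁻¹ := fun i => by
    rw [← inv_neg, neg_sub]
  simp only [sub_inv, Function.comp_apply, _root_.add_apply, _root_.smul_apply, _root_.sum_apply,
    ContinuousLinearMap.comp_apply, ContinuousLinearMap.coe_pi', ContinuousLinearMap.proj_apply,
    smul_eq_mul, mul_neg, neg_mul, sum_neg_distrib, mul_sum, scaledResiduesJacobian, borderedCauchy,
    mul_diagonal, diagonal_mul, of_apply, Fin.sum_univ_succ, Fin.cons_zero, Fin.cons_succ, mul_one]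
  rw [add_comm, add_right_inj, neg_inj]
  exact sum_congr rfl fun i _ => by ring

theorem abs_det_scaledResiduesJacobian {u y : Fin (n + 1) → ℝ} (hy₀ : 0 < y 0)
    (h : Interlaces (Fin.tail y) u) : |(scaledResiduesJacobian u y).det| =
      y 0 ^ n * ((vandermonde (Fin.tail y)).det / (vandermonde u).det) := by
  rw [← h.prod_abs_residue_left_mul_abs_det, scaledResiduesJacobian, det_mul, det_mul,
    det_diagonal, det_diagonal, Fin.prod_cons, prod_const, card_univ, Fintype.card_fin, one_mul,
    abs_mul, abs_mul, abs_prod, abs_pow, abs_neg, abs_of_pos hy₀, mul_comm]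

theorem injOn_reciprocalCoeffs (l : Fin n → ℝ) :
    Set.InjOn (reciprocalCoeffs l) {u | Interlaces l u} := fun u hu u' hu' h => by
  obtain ⟨hsum, hres⟩ := Fin.cons_inj.1 h
  exact residue_right_injOn hu hu' (Prod.ext (sub_left_injective hsum) (neg_injective hres))

theorem image_reciprocalCoeffs {l : Fin n → ℝ} (hl : StrictMono l) :
    reciprocalCoeffs l '' {u | Interlaces l u} =
      {z | Fin.tail z ∈ Set.univ.pi fun _ => Set.Ioi 0} := by
  ext z
  simp only [Set.mem_image, Set.mem_ofPred_eq, Set.mem_univ_pi, Set.mem_Ioi]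
  constructor
  · rintro ⟨u, hu, rfl⟩ i
    exact neg_pos.2 (hu.residue_right_neg i)
  · intro hz
    obtain ⟨u, hu, hsum, hres⟩ := exists_residue_right_eq hl (z 0 + ∑ i, l i)
      (q := fun i => -Fin.tail z i) fun i => neg_neg_iff_pos.2 (hz i)
    refine ⟨u, hu, ?_⟩
    rw [reciprocalCoeffs, hsum, hres, add_sub_cancel_right]
    simp only [neg_neg]
    exact Fin.cons_self_tail z

/-- The Jacobian matrix of `reciprocalCoeffs l`. -/
noncomputable def reciprocalCoeffsJacobian (l : Fin n → ℝ) (u : Fin (n + 1) → ℝ) :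
    Matrix (Fin (n + 1)) (Fin (n + 1)) ℝ :=
  diagonal (Fin.cons 1 fun i => -residue u l i) * (borderedCauchy l u)ᵀ

theorem hasFDerivAt_reciprocalCoeffs {l : Fin n → ℝ} {u : Fin (n + 1) → ℝ} (h : Interlaces l u)
    (k : Fin (n + 1)) : HasFDerivAt (fun u => reciprocalCoeffs l u k)
      (∑ j, reciprocalCoeffsJacobian l u k j •
        ContinuousLinearMap.proj (R := ℝ) (φ := fun _ => ℝ) j) u := by
  cases k using Fin.cases with
  | zero =>
    refine ((HasFDerivAt.fun_sum fun j (_ : j ∈ univ) => hasFDerivAt_apply j u).sub_const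
      (∑ i, l i)).congr_fderiv ?_
    simp [reciprocalCoeffsJacobian, borderedCauchy]
  | succ i =>
    refine (hasFDerivAt_residue fun j => h.ne j i).neg.congr_fderiv ?_
    ext v
    simp [reciprocalCoeffsJacobian, borderedCauchy]

theorem abs_det_reciprocalCoeffsJacobian {l : Fin n → ℝ} {u : Fin (n + 1) → ℝ}
    (h : Interlaces l u) : |(reciprocalCoeffsJacobian l u).det| =
      (vandermonde u).det / (vandermonde l).det := by
  rw [← h.prod_abs_residue_right_mul_abs_det, reciprocalCoeffsJacobian, det_mul, det_diagonal,
    det_transpose, Fin.prod_cons, one_mul, abs_mul, abs_prod]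
  simp only [abs_neg]

theorem setLIntegral_pi_Ioi_eq_scaledResidues {u : Fin (n + 1) → ℝ} (hu : StrictMono u)
    (g : (Fin (n + 1) → ℝ) → ℝ≥0∞) :
    ∫⁻ z in Set.univ.pi fun _ => Set.Ioi 0, g z =
      ∫⁻ y in {y | 0 < y 0 ∧ Interlaces (Fin.tail y) u}, ENNReal.ofReal
        (y 0 ^ n * ((vandermonde (Fin.tail y)).det / (vandermonde u).det)) *
          g (scaledResidues u y) := by
  have hs := measurableSet_pos_and_interlaces_tail u
  rw [← image_scaledResidues hu, lintegral_image_eq_lintegral_abs_det_mul hs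
    (fun y hy => hasFDerivAt_scaledResidues hy.2) (injOn_scaledResidues u)]
  exact setLIntegral_congr_fun hs fun y hy => by
    rw [abs_det_scaledResiduesJacobian hy.1 hy.2]

theorem setLIntegral_tail_pi_Ioi_eq_reciprocalCoeffs {l : Fin n → ℝ} (hl : StrictMono l)
    (g : (Fin (n + 1) → ℝ) → ℝ≥0∞) :
    ∫⁻ z in {z | Fin.tail z ∈ Set.univ.pi fun _ => Set.Ioi 0}, g z =
      ∫⁻ u in {u | Interlaces l u}, ENNReal.ofReal
        ((vandermonde u).det / (vandermonde l).det) * g (reciprocalCoeffs l u) := by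
  have hs : MeasurableSet {u | Interlaces l u} :=
    measurableSet_interlaces measurable_const measurable_id
  rw [← image_reciprocalCoeffs hl, lintegral_image_eq_lintegral_abs_det_mul hs
    (fun u hu => hasFDerivAt_reciprocalCoeffs hu) (injOn_reciprocalCoeffs l)]
  exact setLIntegral_congr_fun hs fun u hu => by rw [abs_det_reciprocalCoeffsJacobian hu]

end ResidueMaps

section ProductIntegrals

variable {α : Type*} [MeasurableSpace α] {n : ℕ}

theorem setLIntegral_pi_zero_mul_tail (μ : Fin (n + 1) → Measure α) [∀ i, SigmaFinite (μ i)]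
    (s : Set α) (t : Set (Fin n → α)) {f : α → ℝ≥0∞} {g : (Fin n → α) → ℝ≥0∞}
    (hf : Measurable f) (hg : Measurable g) :
    ∫⁻ y in {y | y 0 ∈ s ∧ Fin.tail y ∈ t}, f (y 0) * g (Fin.tail y) ∂Measure.pi μ =
      (∫⁻ x in s, f x ∂μ 0) * ∫⁻ x in t, g x ∂(Measure.pi fun i => μ i.succ) := by
  rw [← lintegral_prod_mul hf.aemeasurable hg.aemeasurable, Measure.prod_restrict]
  exact (measurePreserving_piFinSuccAbove μ 0).setLIntegral_comp_preimage_emb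
    (MeasurableEquiv.measurableEmbedding _) (fun p => f p.1 * g p.2) (s ×ˢ t)

theorem lintegral_pi_prod_eq_prod_lintegral (μ : Fin n → Measure α) [∀ i, SigmaFinite (μ i)]
    {f : Fin n → α → ℝ≥0∞} (hf : ∀ i, Measurable (f i)) :
    ∫⁻ x, ∏ i, f i (x i) ∂Measure.pi μ = ∏ i, ∫⁻ x, f i x ∂μ i := by
  induction n with
  | zero => simp
  | succ n ih =>
    have hg : Measurable fun x : Fin n → α => ∏ i, f i.succ (x i) :=
      Finset.measurable_prod _ fun i _ => (hf i.succ).comp (measurable_pi_apply i)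
    have := setLIntegral_pi_zero_mul_tail μ Set.univ Set.univ (hf 0) hg
    simp only [Set.mem_univ, and_self, Set.ofPred_true, Measure.restrict_univ] at this
    simp only [Fin.prod_univ_succ]
    exact this.trans (congrArg _ (ih (fun i => μ i.succ) fun i => hf i.succ))

theorem setLIntegral_univ_pi_prod {s : Set ℝ} {f : Fin n → ℝ → ℝ≥0∞}
    (hf : ∀ i, Measurable (f i)) :
    ∫⁻ x in Set.univ.pi fun _ => s, ∏ i, f i (x i) = ∏ i, ∫⁻ x in s, f i x := by
  rw [volume_pi, Measure.restrict_pi_pi, lintegral_pi_prod_eq_prod_lintegral _ hf]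

theorem lintegral_rpow_mul_exp_neg_mul_Ioi {s b : ℝ} (hs : 0 < s) (hb : 0 < b) :
    ∫⁻ x in Set.Ioi 0, ENNReal.ofReal (x ^ (s - 1) * Real.exp (-(b * x))) =
      ENNReal.ofReal (Real.Gamma s / b ^ s) := by
  have hint : IntegrableOn (fun x : ℝ => x ^ (s - 1) * Real.exp (-(b * x))) (Set.Ioi 0) := by
    simpa only [Real.rpow_one, neg_mul] using
      integrableOn_rpow_mul_exp_neg_mul_rpow (s := s - 1) (p := 1) (by linarith) one_pos hb
  rw [← ofReal_integral_eq_lintegral_ofReal hint, Real.integral_rpow_mul_exp_neg_mul_Ioi hs hb,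
    one_div, Real.inv_rpow hb.le, mul_comm, div_eq_mul_inv]
  filter_upwards [ae_restrict_mem measurableSet_Ioi] with x hx
  exact mul_nonneg (Real.rpow_nonneg (le_of_lt hx) _) (Real.exp_nonneg _)

theorem lintegral_gaussian {b : ℝ} (hb : 0 < b) :
    ∫⁻ x : ℝ, ENNReal.ofReal (Real.exp (-(b / 2) * x ^ 2)) =
      ENNReal.ofReal √(2 * Real.pi / b) := by
  rw [← ofReal_integral_eq_lintegral_ofReal (integrable_exp_neg_mul_sq (half_pos hb))
    (ae_of_all _ fun x => Real.exp_nonneg _), integral_gaussian]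
  congr 2
  field_simp

theorem setLIntegral_pi_Ioi_prod_rpow_mul_exp {s : Fin n → ℝ} (hs : ∀ i, 0 < s i) {b : ℝ}
    (hb : 0 < b) :
    ∫⁻ z in Set.univ.pi fun _ => Set.Ioi 0,
        ENNReal.ofReal (∏ i, z i ^ (s i - 1) * Real.exp (-(b * z i))) =
      ENNReal.ofReal (∏ i, Real.Gamma (s i) / b ^ s i) := by
  rw [ENNReal.ofReal_prod_of_nonneg fun i _ => (div_pos (Real.Gamma_pos_of_pos (hs i))
    (Real.rpow_pos_of_pos hb _)).le]
  simp only [← lintegral_rpow_mul_exp_neg_mul_Ioi (hs _) hb]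
  rw [← setLIntegral_univ_pi_prod fun i => by fun_prop]
  refine setLIntegral_congr_fun (MeasurableSet.univ_pi fun _ => measurableSet_Ioi) fun z hz => ?_
  exact ENNReal.ofReal_prod_of_nonneg fun i _ =>
    mul_nonneg (Real.rpow_nonneg (hz i trivial).le _) (Real.exp_nonneg _)

end ProductIntegrals

section DixonAnderson

variable {n : ℕ}

theorem measurable_det_vandermonde {β : Type*} [MeasurableSpace β] {f : β → Fin n → ℝ}
    (hf : Measurable f) : Measurable fun a => (vandermonde (f a)).det := by
  simp only [det_vandermonde]
  fun_prop

theorem measurable_residue {β ι κ : Type*} [MeasurableSpace β] [Fintype ι] [Fintype κ]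
    [DecidableEq κ] {f : β → ι → ℝ} {g : β → κ → ℝ} (hf : Measurable f) (hg : Measurable g)
    (j : κ) : Measurable fun a => residue (f a) (g a) j := by
  simp only [residue, nodalWeight, eval_nodal]
  fun_prop

/-- The Dixon-Anderson density in `l`, on the chamber of the `l` interlacing with `u`; the `s j` are
the exponents of the corresponding Dirichlet distribution of the residues. -/
noncomputable def dixonAndersonWeight (s : Fin (n + 1) → ℝ) (l : Fin n → ℝ)
    (u : Fin (n + 1) → ℝ) : ℝ :=
  (vandermonde l).det / (vandermonde u).det * ∏ j, residue l u j ^ (s j - 1)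

/-- The Gaussian counterpart of `dixonAndersonWeight`: a density in `u`, on the chamber of the `u`
interlacing with `l`. -/
noncomputable def gaussianDixonAndersonWeight (b : ℝ) (s l : Fin n → ℝ)
    (u : Fin (n + 1) → ℝ) : ℝ :=
  (vandermonde u).det / (vandermonde l).det *
    ((∏ i, (-residue u l i) ^ (s i - 1)) * Real.exp (-(b / 2) * (∑ j, u j ^ 2 - ∑ i, l i ^ 2)))

theorem measurable_dixonAndersonWeight (s u : Fin (n + 1) → ℝ) :
    Measurable fun l => dixonAndersonWeight s l u :=
  ((measurable_det_vandermonde measurable_id).div_const _).mul (Finset.measurable_prod _ fun j _ =>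
    (measurable_residue measurable_id measurable_const j).pow_const _)

theorem Interlaces.prod_scaledResidues_rpow_mul_exp {u y : Fin (n + 1) → ℝ} (hy₀ : 0 < y 0)
    (h : Interlaces (Fin.tail y) u) (s : Fin (n + 1) → ℝ) :
    y 0 ^ n * ((vandermonde (Fin.tail y)).det / (vandermonde u).det) *
        ∏ j, scaledResidues u y j ^ (s j - 1) * Real.exp (-(1 * scaledResidues u y j)) =
      y 0 ^ (∑ j, s j - 1) * Real.exp (-(1 * y 0)) * dixonAndersonWeight s (Fin.tail y) u := by
  have hexp : ∏ j, Real.exp (-(1 * scaledResidues u y j)) = Real.exp (-(1 * y 0)) := by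
    rw [← Real.exp_sum, sum_neg_distrib, ← mul_sum,
      sum_scaledResidues h.strictMono_right.injective]
  have hpow : ∏ j, scaledResidues u y j ^ (s j - 1) =
      y 0 ^ (∑ j, (s j - 1)) * ∏ j, residue (Fin.tail y) u j ^ (s j - 1) := by
    rw [Real.rpow_sum_of_pos hy₀, ← prod_mul_distrib]
    exact prod_congr rfl fun j _ => Real.mul_rpow hy₀.le (h.residue_left_pos j).le
  have hdeg : y 0 ^ n * y 0 ^ (∑ j, (s j - 1)) = y 0 ^ (∑ j, s j - 1) := by
    rw [← Real.rpow_natCast, ← Real.rpow_add hy₀, sum_sub_distrib, sum_const, card_univ,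
      Fintype.card_fin, nsmul_one]
    congr 1
    push_cast
    ring
  rw [prod_mul_distrib, hexp, hpow, ← hdeg, dixonAndersonWeight]
  ring

theorem setLIntegral_dixonAndersonWeight {u : Fin (n + 1) → ℝ} (hu : StrictMono u)
    {s : Fin (n + 1) → ℝ} (hs : ∀ j, 0 < s j) :
    ∫⁻ l in {l | Interlaces l u}, ENNReal.ofReal (dixonAndersonWeight s l u) =
      ENNReal.ofReal ((∏ j, Real.Gamma (s j)) / Real.Gamma (∑ j, s j)) := by
  have hsum : 0 < ∑ j, s j := sum_pos (fun j _ => hs j) univ_nonempty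
  have hΓ := Real.Gamma_pos_of_pos hsum
  have hsplit : ∀ y : Fin (n + 1) → ℝ, 0 < y 0 ∧ Interlaces (Fin.tail y) u →
      ENNReal.ofReal (y 0 ^ n * ((vandermonde (Fin.tail y)).det / (vandermonde u).det)) *
        ENNReal.ofReal (∏ j, scaledResidues u y j ^ (s j - 1) *
          Real.exp (-(1 * scaledResidues u y j))) =
      ENNReal.ofReal (y 0 ^ (∑ j, s j - 1) * Real.exp (-(1 * y 0))) *
        ENNReal.ofReal (dixonAndersonWeight s (Fin.tail y) u) := fun y ⟨hy₀, hy⟩ => by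
    have hV := (div_pos (det_vandermonde_pos hy.strictMono_left) (det_vandermonde_pos hu)).le
    rw [← ENNReal.ofReal_mul (by positivity), ← ENNReal.ofReal_mul (by positivity),
      hy.prod_scaledResidues_rpow_mul_exp hy₀]
  have key : ENNReal.ofReal (∏ j, Real.Gamma (s j)) = ENNReal.ofReal (Real.Gamma (∑ j, s j)) *
      ∫⁻ l in {l | Interlaces l u}, ENNReal.ofReal (dixonAndersonWeight s l u) := by
    have hG := setLIntegral_pi_Ioi_prod_rpow_mul_exp hs one_pos
    have hG₀ := lintegral_rpow_mul_exp_neg_mul_Ioi hsum one_pos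
    simp only [Real.one_rpow, div_one] at hG hG₀
    rw [← hG, ← hG₀, setLIntegral_pi_Ioi_eq_scaledResidues hu,
      setLIntegral_congr_fun (measurableSet_pos_and_interlaces_tail u) hsplit]
    exact setLIntegral_pi_zero_mul_tail (fun _ => volume) (Set.Ioi 0) {l | Interlaces l u}
      (f := fun t => ENNReal.ofReal (t ^ (∑ j, s j - 1) * Real.exp (-(1 * t)))) (by fun_prop)
      (measurable_dixonAndersonWeight s u).ennreal_ofReal
  rw [ENNReal.ofReal_div_of_pos hΓ, key, mul_comm, ENNReal.mul_div_cancel_right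
    (ENNReal.ofReal_pos.2 hΓ).ne' ENNReal.ofReal_ne_top]

theorem exp_reciprocalCoeffs_zero_mul_prod {l : Fin n → ℝ} (hl : Function.Injective l) (b : ℝ)
    (s : Fin n → ℝ) (u : Fin (n + 1) → ℝ) :
    (vandermonde u).det / (vandermonde l).det *
        (Real.exp (-(b / 2) * reciprocalCoeffs l u 0 ^ 2) *
          ∏ i, Fin.tail (reciprocalCoeffs l u) i ^ (s i - 1) *
            Real.exp (-(b * Fin.tail (reciprocalCoeffs l u) i))) =
      gaussianDixonAndersonWeight b s l u := by
  have hexp : Real.exp (-(b / 2) * (∑ j, u j - ∑ i, l i) ^ 2) *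
      ∏ i, Real.exp (-(b * -residue u l i)) =
        Real.exp (-(b / 2) * (∑ j, u j ^ 2 - ∑ i, l i ^ 2)) := by
    rw [← Real.exp_sum, ← Real.exp_add]
    simp only [mul_neg, neg_neg, ← mul_sum]
    congr 1
    linear_combination b / 2 * two_mul_sum_residue hl u
  rw [gaussianDixonAndersonWeight, ← hexp]
  simp only [reciprocalCoeffs, Fin.tail_cons, Fin.cons_zero, prod_mul_distrib]
  ring

theorem setLIntegral_gaussianDixonAndersonWeight {l : Fin n → ℝ} (hl : StrictMono l)
    {s : Fin n → ℝ} (hs : ∀ i, 0 < s i) {b : ℝ} (hb : 0 < b) :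
    ∫⁻ u in {u | Interlaces l u}, ENNReal.ofReal (gaussianDixonAndersonWeight b s l u) =
      ENNReal.ofReal (√(2 * Real.pi / b) * ∏ i, Real.Gamma (s i) / b ^ s i) := by
  have hsplit : ∀ u, Interlaces l u →
      ENNReal.ofReal ((vandermonde u).det / (vandermonde l).det) *
        (ENNReal.ofReal (Real.exp (-(b / 2) * reciprocalCoeffs l u 0 ^ 2)) *
          ENNReal.ofReal (∏ i, Fin.tail (reciprocalCoeffs l u) i ^ (s i - 1) *
            Real.exp (-(b * Fin.tail (reciprocalCoeffs l u) i)))) =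
      ENNReal.ofReal (gaussianDixonAndersonWeight b s l u) := fun u hu => by
    have hV := div_pos (det_vandermonde_pos hu.strictMono_right) (det_vandermonde_pos hl)
    rw [← ENNReal.ofReal_mul (Real.exp_nonneg _), ← ENNReal.ofReal_mul hV.le,
      exp_reciprocalCoeffs_zero_mul_prod hl.injective]
  have hprod := setLIntegral_pi_zero_mul_tail (fun _ : Fin (n + 1) => volume) Set.univ
    (Set.univ.pi fun _ => Set.Ioi 0)
    (f := fun t => ENNReal.ofReal (Real.exp (-(b / 2) * t ^ 2)))
    (g := fun z => ENNReal.ofReal (∏ i : Fin n, z i ^ (s i - 1) * Real.exp (-(b * z i))))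
    (by fun_prop) (by fun_prop)
  simp only [Set.mem_univ, true_and, ← volume_pi, Measure.restrict_univ] at hprod
  rw [ENNReal.ofReal_mul (Real.sqrt_nonneg _), ← lintegral_gaussian hb,
    ← setLIntegral_pi_Ioi_prod_rpow_mul_exp hs hb, ← hprod,
    setLIntegral_tail_pi_Ioi_eq_reciprocalCoeffs hl]
  exact (setLIntegral_congr_fun (measurableSet_interlaces measurable_const measurable_id)
    hsplit).symm

end DixonAnderson

section Chamber

theorem measurableSet_strictMono {n : ℕ} : MeasurableSet {x : Fin n → ℝ | StrictMono x} := by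
  simp only [StrictMono, Set.ofPred_forall]
  exact MeasurableSet.iInter fun i => MeasurableSet.iInter fun j => MeasurableSet.iInter fun _ =>
    measurableSet_lt (measurable_pi_apply i) (measurable_pi_apply j)

theorem ae_injective {ι : Type*} [Fintype ι] : ∀ᵐ x : ι → ℝ, Function.Injective x := by
  have hne : ∀ i j : ι, i ≠ j → ∀ᵐ x : ι → ℝ, x i ≠ x j := fun i j hij => by
    classical
    let f : (ι → ℝ) →ₗ[ℝ] ℝ :=
      LinearMap.proj (R := ℝ) (φ := fun _ => ℝ) i - LinearMap.proj (R := ℝ) (φ := fun _ => ℝ) j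
    have hf : f.ker ≠ ⊤ := fun h => by
      have : Pi.single i 1 ∈ f.ker := h ▸ Submodule.mem_top
      simp [f, hij] at this
    refine measure_mono_null (fun x hx => ?_) (Measure.addHaar_submodule volume _ hf)
    simpa [f, sub_eq_zero] using hx
  simp only [← ae_all_iff] at hne
  filter_upwards [hne] with x hx i j
  exact not_imp_not.1 (hx i j)

theorem measurePreserving_comp_perm {ι : Type*} [Fintype ι] (σ : Equiv.Perm ι) :
    MeasurePreserving (fun x : ι → ℝ => x ∘ σ) := by
  have h : (fun x : ι → ℝ => x ∘ σ) = MeasurableEquiv.piCongrLeft (fun _ : ι => ℝ) σ.symm := by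
    funext x i
    have := MeasurableEquiv.piCongrLeft_apply_apply (β := fun _ : ι => ℝ) σ.symm x (σ i)
    rw [Equiv.symm_apply_apply] at this
    exact this.symm
  exact h ▸ volume_measurePreserving_piCongrLeft (fun _ : ι => ℝ) σ.symm

theorem strictMono_comp_perm_iff {n : ℕ} {α : Type*} [LinearOrder α] {x : Fin n → α}
    (hx : Function.Injective x) {σ : Equiv.Perm (Fin n)} :
    StrictMono (x ∘ σ) ↔ σ = Tuple.sort x := by
  refine ⟨fun h => ?_, fun h => h ▸
    (Tuple.monotone_sort x).strictMono_of_injective (hx.comp (Equiv.injective _))⟩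
  have := Tuple.unique_monotone h.monotone (Tuple.monotone_sort x)
  exact Equiv.ext fun i => hx (congrFun this i)

theorem lintegral_eq_factorial_mul_setLIntegral_strictMono {n : ℕ} {f : (Fin n → ℝ) → ℝ≥0∞}
    (hf : Measurable f) (hperm : ∀ (σ : Equiv.Perm (Fin n)) x, f (x ∘ σ) = f x) :
    ∫⁻ x, f x = n.factorial * ∫⁻ x in {x | StrictMono x}, f x := by
  classical
  have hsum : ∀ x : Fin n → ℝ, Function.Injective x →
      f x = ∑ σ : Equiv.Perm (Fin n), {x | StrictMono x}.indicator f (x ∘ σ) := fun x hx => by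
    simp only [Set.indicator_apply, Set.mem_ofPred_eq, strictMono_comp_perm_iff hx, hperm,
      sum_ite_eq', mem_univ, if_true]
  have hm := hf.indicator (measurableSet_strictMono (n := n))
  have hm' : ∀ σ ∈ (univ : Finset (Equiv.Perm (Fin n))),
      Measurable fun x => {x | StrictMono x}.indicator f (x ∘ σ) := fun σ _ =>
    hm.comp (measurePreserving_comp_perm σ).measurable
  rw [lintegral_congr_ae (ae_injective.mono hsum), lintegral_finsetSum _ hm']
  simp only [(measurePreserving_comp_perm _).lintegral_comp hm,
    lintegral_indicator measurableSet_strictMono, sum_const, card_univ, Fintype.card_perm,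
    Fintype.card_fin, nsmul_eq_mul]

end Chamber

section Mehta

/-- The integrand of the Mehta integral, `∏ i < j, |x j - x i| ^ (2 * γ)` times a Gaussian of
inverse variance `b`. -/
noncomputable def mehtaDensity {n : ℕ} (γ b : ℝ) (x : Fin n → ℝ) : ℝ :=
  |(vandermonde x).det| ^ (2 * γ) * Real.exp (-(b / 2) * ∑ i, x i ^ 2)

variable {n : ℕ} {γ b : ℝ}

theorem mehtaDensity_nonneg (γ b : ℝ) (x : Fin n → ℝ) : 0 ≤ mehtaDensity γ b x :=
  mul_nonneg (Real.rpow_nonneg (abs_nonneg _) _) (Real.exp_nonneg _)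

theorem mehtaDensity_eq_prod (γ b : ℝ) (x : Fin n → ℝ) :
    mehtaDensity γ b x = (∏ i, ∏ j ∈ Ioi i, |x j - x i| ^ (2 * γ)) *
      Real.exp (-(b / 2) * ∑ i, x i ^ 2) := by
  simp only [mehtaDensity, det_vandermonde, abs_prod]
  rw [← Real.finsetProd_rpow _ _ fun i _ => prod_nonneg fun _ _ => abs_nonneg _]
  simp only [← Real.finsetProd_rpow _ _ fun _ _ => abs_nonneg _]

theorem measurable_mehtaDensity (γ b : ℝ) :
    Measurable fun x : Fin n → ℝ => mehtaDensity γ b x := by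
  simp only [mehtaDensity_eq_prod]
  fun_prop

theorem mehtaDensity_comp_perm (γ b : ℝ) (σ : Equiv.Perm (Fin n)) (x : Fin n → ℝ) :
    mehtaDensity γ b (x ∘ σ) = mehtaDensity γ b x := by
  have hdet : |(vandermonde (x ∘ σ)).det| = |(vandermonde x).det| := by
    have := det_permute σ (vandermonde x)
    rw [show vandermonde (x ∘ σ) = (vandermonde x).submatrix σ id from rfl, this, abs_mul]
    rcases Int.units_eq_one_or (Equiv.Perm.sign σ) with h | h <;> simp [h]
  rw [mehtaDensity, hdet, mehtaDensity, ← Equiv.sum_comp σ fun i => x i ^ 2]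
  rfl

theorem prod_abs_residue_rpow {ι : Type*} [Fintype ι] (x : ι → ℝ) (y : Fin n → ℝ) (a : ℝ) :
    ∏ j, |residue x y j| ^ a =
      (∏ j, |(nodal univ x).eval (y j)|) ^ a / ((vandermonde y).det ^ 2) ^ a := by
  rw [Real.finsetProd_rpow _ _ fun j _ => abs_nonneg _, prod_abs_residue,
    Real.div_rpow (prod_nonneg fun j _ => abs_nonneg _) (sq_nonneg _)]

theorem mehtaDensity_of_strictMono {x : Fin n → ℝ} (hx : StrictMono x) (γ b : ℝ) :
    mehtaDensity γ b x = ((vandermonde x).det ^ 2) ^ (γ - 1) * (vandermonde x).det ^ 2 *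
      Real.exp (-(b / 2) * ∑ i, x i ^ 2) := by
  have hV := det_vandermonde_pos hx
  rw [mehtaDensity, abs_of_pos hV, Real.rpow_mul hV.le, Real.rpow_two,
    Real.rpow_sub_one (by positivity), div_mul_cancel₀ _ (by positivity)]

theorem Interlaces.mehtaDensity_mul_comm {l : Fin n → ℝ} {u : Fin (n + 1) → ℝ}
    (h : Interlaces l u) (γ b : ℝ) :
    mehtaDensity γ b l * gaussianDixonAndersonWeight b (fun _ => γ) l u =
      mehtaDensity γ b u * dixonAndersonWeight (fun _ => γ) l u := by
  have hl := det_vandermonde_pos h.strictMono_left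
  have hu := det_vandermonde_pos h.strictMono_right
  have hleft : ∏ j, residue l u j ^ (γ - 1) = ∏ j, |residue l u j| ^ (γ - 1) :=
    prod_congr rfl fun j _ => by rw [abs_of_pos (h.residue_left_pos j)]
  have hright : ∏ i, (-residue u l i) ^ (γ - 1) = ∏ i, |residue u l i| ^ (γ - 1) :=
    prod_congr rfl fun i _ => by rw [abs_of_neg (h.residue_right_neg i)]
  have hexp : Real.exp (-(b / 2) * ∑ j, u j ^ 2) = Real.exp (-(b / 2) * ∑ i, l i ^ 2) *
      Real.exp (-(b / 2) * (∑ j, u j ^ 2 - ∑ i, l i ^ 2)) := by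
    rw [← Real.exp_add]
    congr 1
    ring
  rw [gaussianDixonAndersonWeight, dixonAndersonWeight, hleft, hright, prod_abs_residue_rpow,
    prod_abs_residue_rpow, prod_abs_eval_nodal_comm u l,
    mehtaDensity_of_strictMono h.strictMono_left, mehtaDensity_of_strictMono h.strictMono_right,
    hexp]
  have := Real.rpow_pos_of_pos (pow_pos hl 2) (γ - 1)
  have := Real.rpow_pos_of_pos (pow_pos hu 2) (γ - 1)
  field_simp

theorem lintegral_setLIntegral_swap {α β : Type*} [MeasurableSpace α] [MeasurableSpace β]
    {μ : Measure α} {ν : Measure β} [SFinite μ] [SFinite ν] {s : Set (α × β)}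
    (hs : MeasurableSet s) {f : α → β → ℝ≥0∞} (hf : Measurable (Function.uncurry f)) :
    ∫⁻ x, ∫⁻ y in {y | (x, y) ∈ s}, f x y ∂ν ∂μ =
      ∫⁻ y, ∫⁻ x in {x | (x, y) ∈ s}, f x y ∂μ ∂ν := by
  have hx : ∀ x, MeasurableSet {y | (x, y) ∈ s} := fun x => measurable_prodMk_left hs
  have hy : ∀ y, MeasurableSet {x | (x, y) ∈ s} := fun y => measurable_prodMk_right hs
  simp only [← lintegral_indicator (hx _), ← lintegral_indicator (hy _)]
  exact lintegral_lintegral_swap (f := fun x y => s.indicator (Function.uncurry f) (x, y))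
    (hf.indicator hs).aemeasurable

theorem setLIntegral_interlaces_swap {f : (Fin n → ℝ) → (Fin (n + 1) → ℝ) → ℝ≥0∞}
    (hf : Measurable (Function.uncurry f)) :
    ∫⁻ l in {l | StrictMono l}, ∫⁻ u in {u | Interlaces l u}, f l u =
      ∫⁻ u in {u | StrictMono u}, ∫⁻ l in {l | Interlaces l u}, f l u := by
  have h := lintegral_setLIntegral_swap (μ := volume.restrict {l | StrictMono l})
    (ν := volume.restrict {u | StrictMono u})
    (measurableSet_interlaces measurable_fst measurable_snd) hf
  simp only [Set.mem_ofPred_eq] at h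
  have hu : ∀ l : Fin n → ℝ, {u | Interlaces l u} ⊆ {u | StrictMono u} := fun _ _ h =>
    h.strictMono_right
  have hl : ∀ u : Fin (n + 1) → ℝ, {l | Interlaces l u} ⊆ {l | StrictMono l} := fun _ _ h =>
    h.strictMono_left
  simpa only [Measure.restrict_restrict_of_subset (hu _),
    Measure.restrict_restrict_of_subset (hl _)] using h

theorem measurable_gaussianDixonAndersonWeight (b : ℝ) (s : Fin n → ℝ) :
    Measurable fun p : (Fin n → ℝ) × (Fin (n + 1) → ℝ) =>
      gaussianDixonAndersonWeight b s p.1 p.2 := by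
  have hexp : Measurable fun p : (Fin n → ℝ) × (Fin (n + 1) → ℝ) =>
      Real.exp (-(b / 2) * (∑ j, p.2 j ^ 2 - ∑ i, p.1 i ^ 2)) := by fun_prop
  exact ((measurable_det_vandermonde measurable_snd).div
    (measurable_det_vandermonde measurable_fst)).mul ((Finset.measurable_prod _ fun i _ =>
      (measurable_residue measurable_snd measurable_fst i).neg.pow_const _).mul hexp)

theorem setLIntegral_interlaces_right_mehtaDensity_mul {l : Fin n → ℝ} (hl : StrictMono l)
    (hγ : 0 < γ) (hb : 0 < b) :
    ∫⁻ u in {u | Interlaces l u}, ENNReal.ofReal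
        (mehtaDensity γ b l * gaussianDixonAndersonWeight b (fun _ => γ) l u) =
      ENNReal.ofReal (mehtaDensity γ b l) *
        ENNReal.ofReal (√(2 * Real.pi / b) * (Real.Gamma γ / b ^ γ) ^ n) := by
  simp only [ENNReal.ofReal_mul (mehtaDensity_nonneg γ b l)]
  rw [lintegral_const_mul' _ _ ENNReal.ofReal_ne_top,
    setLIntegral_gaussianDixonAndersonWeight hl (fun _ => hγ) hb, prod_const, card_univ,
    Fintype.card_fin]

theorem setLIntegral_interlaces_left_mehtaDensity_mul {u : Fin (n + 1) → ℝ} (hu : StrictMono u)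
    (hγ : 0 < γ) (b : ℝ) :
    ∫⁻ l in {l | Interlaces l u}, ENNReal.ofReal
        (mehtaDensity γ b l * gaussianDixonAndersonWeight b (fun _ => γ) l u) =
      ENNReal.ofReal (mehtaDensity γ b u) *
        ENNReal.ofReal (Real.Gamma γ ^ (n + 1) / Real.Gamma ((n + 1) * γ)) := by
  have hmeas : MeasurableSet {l | Interlaces l u} :=
    measurableSet_interlaces measurable_id measurable_const
  rw [setLIntegral_congr_fun hmeas fun l (h : Interlaces l u) => by
      rw [h.mehtaDensity_mul_comm, ENNReal.ofReal_mul (mehtaDensity_nonneg γ b u)],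
    lintegral_const_mul' _ _ ENNReal.ofReal_ne_top,
    setLIntegral_dixonAndersonWeight hu fun _ => hγ, prod_const, sum_const, card_univ,
    Fintype.card_fin, nsmul_eq_mul, Nat.cast_succ]

theorem setLIntegral_strictMono_mehtaDensity_mul (n : ℕ) (hγ : 0 < γ) (hb : 0 < b) :
    (∫⁻ l in {l : Fin n → ℝ | StrictMono l}, ENNReal.ofReal (mehtaDensity γ b l)) *
        ENNReal.ofReal (√(2 * Real.pi / b) * (Real.Gamma γ / b ^ γ) ^ n) =
      (∫⁻ u in {u : Fin (n + 1) → ℝ | StrictMono u}, ENNReal.ofReal (mehtaDensity γ b u)) *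
        ENNReal.ofReal (Real.Gamma γ ^ (n + 1) / Real.Gamma ((n + 1) * γ)) := by
  rw [← lintegral_mul_const' _ _ ENNReal.ofReal_ne_top,
    ← lintegral_mul_const' _ _ ENNReal.ofReal_ne_top,
    setLIntegral_congr_fun measurableSet_strictMono fun l hl =>
      (setLIntegral_interlaces_right_mehtaDensity_mul hl hγ hb).symm,
    setLIntegral_congr_fun measurableSet_strictMono fun u hu =>
      (setLIntegral_interlaces_left_mehtaDensity_mul hu hγ b).symm]
  exact setLIntegral_interlaces_swap (((measurable_mehtaDensity γ b).comp measurable_fst).mul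
    (measurable_gaussianDixonAndersonWeight b fun _ => γ)).ennreal_ofReal

theorem lintegral_mehtaDensity_eq_factorial_mul (n : ℕ) (γ b : ℝ) :
    ∫⁻ x : Fin n → ℝ, ENNReal.ofReal (mehtaDensity γ b x) =
      n.factorial * ∫⁻ x in {x : Fin n → ℝ | StrictMono x}, ENNReal.ofReal (mehtaDensity γ b x) :=
  lintegral_eq_factorial_mul_setLIntegral_strictMono
    (measurable_mehtaDensity γ b).ennreal_ofReal fun σ x => by rw [mehtaDensity_comp_perm]

theorem lintegral_mehtaDensity_succ (n : ℕ) (hγ : 0 < γ) (hb : 0 < b) :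
    ∫⁻ x : Fin (n + 1) → ℝ, ENNReal.ofReal (mehtaDensity γ b x) =
      (∫⁻ x : Fin n → ℝ, ENNReal.ofReal (mehtaDensity γ b x)) *
        ENNReal.ofReal (√(2 * Real.pi / b) * (b ^ (-γ)) ^ n *
          (Real.Gamma (1 + (1 + n) * γ) / Real.Gamma (1 + γ))) := by
  have := Real.Gamma_pos_of_pos hγ
  have hnγ : 0 < (1 + n) * γ := by positivity
  have := Real.Gamma_pos_of_pos hnγ
  set C := √(2 * Real.pi / b) * (Real.Gamma γ / b ^ γ) ^ n with hC
  set D := Real.Gamma γ ^ (n + 1) / Real.Gamma ((n + 1) * γ) with hD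
  have hD₀ : 0 < D := by rw [hD, add_comm (n : ℝ)]; positivity
  have hconst : √(2 * Real.pi / b) * (b ^ (-γ)) ^ n *
      (Real.Gamma (1 + (1 + n) * γ) / Real.Gamma (1 + γ)) = (n + 1 : ℕ) * (C / D) := by
    rw [hC, hD, add_comm 1 (_ * γ), Real.Gamma_add_one hnγ.ne', add_comm 1 γ,
      Real.Gamma_add_one hγ.ne', Real.rpow_neg hb.le, inv_pow, div_pow, add_comm (n : ℝ)]
    push_cast
    field_simp
    ring
  have hchamber : ∫⁻ u in {u : Fin (n + 1) → ℝ | StrictMono u},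
      ENNReal.ofReal (mehtaDensity γ b u) =
        (∫⁻ l in {l : Fin n → ℝ | StrictMono l}, ENNReal.ofReal (mehtaDensity γ b l)) *
          ENNReal.ofReal (C / D) := by
    rw [ENNReal.ofReal_div_of_pos hD₀, ← mul_div_assoc,
      setLIntegral_strictMono_mehtaDensity_mul n hγ hb,
      ENNReal.mul_div_cancel_right (ENNReal.ofReal_pos.2 hD₀).ne' ENNReal.ofReal_ne_top]
  rw [lintegral_mehtaDensity_eq_factorial_mul, lintegral_mehtaDensity_eq_factorial_mul, hchamber,
    hconst, ENNReal.ofReal_mul (Nat.cast_nonneg _), ENNReal.ofReal_natCast, Nat.factorial_succ,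
    Nat.cast_mul]
  ring

theorem lintegral_mehtaDensity (N : ℕ) (hγ : 0 < γ) (hb : 0 < b) :
    ∫⁻ x : Fin N → ℝ, ENNReal.ofReal (mehtaDensity γ b x) =
      ENNReal.ofReal ((√(2 * Real.pi) * b ^ (-(((N : ℝ) - 1) * γ + 1) / 2)) ^ N *
        ∏ j ∈ range N, Real.Gamma (1 + (1 + (j : ℝ)) * γ) / Real.Gamma (1 + γ)) := by
  induction N with
  | zero => simp [mehtaDensity, volume_pi]
  | succ n ih =>
    have hpos : ∀ a : ℝ, 0 < a → 0 < Real.Gamma (1 + a * γ) := fun a ha =>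
      Real.Gamma_pos_of_pos (by positivity)
    have hΓ := Real.Gamma_pos_of_pos (show 0 < 1 + γ by positivity)
    have hsqrt : √(2 * Real.pi / b) = √(2 * Real.pi) * b ^ (-(1 / 2) : ℝ) := by
      rw [Real.sqrt_div (by positivity), Real.rpow_neg hb.le, ← Real.sqrt_eq_rpow, div_eq_mul_inv]
    have hpow : (b ^ (-(((n + 1 : ℕ) - 1) * γ + 1) / 2 : ℝ)) ^ (n + 1) =
        (b ^ (-((n - 1) * γ + 1) / 2 : ℝ)) ^ n * (b ^ (-(1 / 2) : ℝ) * (b ^ (-γ)) ^ n) := by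
      simp only [← Real.rpow_mul_natCast hb.le, ← Real.rpow_add hb]
      congr 1
      push_cast
      ring
    rw [lintegral_mehtaDensity_succ n hγ hb, ih, prod_range_succ, hsqrt, ← ENNReal.ofReal_mul,
      mul_pow, mul_pow, hpow]
    · congr 1
      ring
    · refine mul_nonneg (by positivity) (prod_nonneg fun j _ => ?_)
      exact div_nonneg (hpos _ (by positivity)).le hΓ.le

end Mehta

theorem stmt1_general (N : ℕ) {γ b : ℝ} (hγ : 0 < γ) (hb : 0 < b) :
    ∫ l : Fin N → ℝ,
        (∏ i : Fin N, ∏ j ∈ Finset.Ioi i, |l j - l i| ^ (2 * γ)) *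
          Real.exp (-(b / 2) * ∑ j, (l j) ^ 2) =
      (Real.sqrt (2 * Real.pi) * b ^ (-(((N : ℝ) - 1) * γ + 1) / 2)) ^ N *
        ∏ j ∈ Finset.range N, Real.Gamma (1 + (1 + (j : ℝ)) * γ) / Real.Gamma (1 + γ) := by
  simp only [← mehtaDensity_eq_prod]
  rw [integral_eq_lintegral_of_nonneg_ae (ae_of_all _ (mehtaDensity_nonneg γ b))
    (measurable_mehtaDensity γ b).aestronglyMeasurable, lintegral_mehtaDensity N hγ hb,
    ENNReal.toReal_ofReal]
  refine mul_nonneg (by positivity) (prod_nonneg fun j _ => div_nonneg ?_ ?_) <;>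
    exact (Real.Gamma_pos_of_pos (by positivity)).le

/-- Mehta/Selberg-type Gaussian integral: for `N ≥ 1` and real `γ > 0`,
`∫_{ℝ^N} ∏_{i<j} |λ_j - λ_i|^{2γ} e^{-(γ/2)(λ_1² + ⋯ + λ_N²)} dλ
  = (√(2π) γ^{-((N-1)γ+1)/2})^N ∏_{j=0}^{N-1} Γ(1+(1+j)γ)/Γ(1+γ)`. -/
theorem stmt1 (N : ℕ) (hN : 1 ≤ N) (γ : ℝ) (hγ : 0 < γ) :
    ∫ l : Fin N → ℝ,
        (∏ i : Fin N, ∏ j ∈ Finset.Ioi i, |l j - l i| ^ (2 * γ)) *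
          Real.exp (-(γ / 2) * ∑ j, (l j) ^ 2) =
      (Real.sqrt (2 * Real.pi) * γ ^ (-(((N : ℝ) - 1) * γ + 1) / 2)) ^ N *
        ∏ j ∈ Finset.range N, Real.Gamma (1 + (1 + (j : ℝ)) * γ) / Real.Gamma (1 + γ) := by
  exact stmt1_general N hγ hγ
end

section
/- Let q and K be positive integers and let t be a real number with 0 < t < 1/(qK). Then ∏_{j=0}^{qK−1} Γ(1/(tq) − j/q) = ( Γ(1/(tq)) / Γ(1/(tq) − K) ) · (2π)^{K(q−1)/2} · q^{K(1/2 − 1/t) + qK(K+1)/2} · ∏_{j=1}^{K} Γ(1/t − qj). -/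
/-!
Gauss's multiplication formula comes from the Bohr–Mollerup theorem: the normalised product of the
values `Γ((s + k) / n)`, `k < n`, is log-convex, satisfies the functional equation of `Γ`, and
equals `1` at `s = 1`. The last point is the evaluation `(∏_{0<k<n} Γ(k/n))² = (2π)^(n-1) / n`,
obtained by pairing `k` with `n - k` in the reflection formula and from `∏_{0<k<n} 2 sin(πk/n) = n`,
the modulus of `∏_{0<k<n} (1 - ζᵏ) = n` for a primitive `n`-th root of unity `ζ`.

With `x = 1/(tq)`, the points `x - 1/q, x - 2/q, …, x - K` split into `K` blocks of `q` consecutive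
points with spacing `1/q`, and Gauss's formula evaluates the product of `Γ` over each block. The
product in the theorem runs instead over `x, x - 1/q, …, x - K + 1/q`; exchanging the end points
gives the factor `Γ(x) / Γ(x - K)`.
-/

section GaussMultiplication

open Finset Real

variable {n : ℕ}

lemma norm_one_sub_exp_two_pi_mul_I_mul {x : ℝ} (hx₀ : 0 ≤ x) (hx₁ : x ≤ 1) :
    ‖1 - Complex.exp (2 * π * Complex.I * x)‖ = 2 * sin (π * x) := by
  have harg : 2 * π * Complex.I * x = Complex.I * ((2 * π * x : ℝ) : ℂ) := by
    push_cast
    ring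
  have hhalf : 2 * π * x / 2 = π * x := by ring
  have hsin : 0 ≤ sin (π * x) :=
    sin_nonneg_of_nonneg_of_le_pi (by positivity) (mul_le_of_le_one_right pi_nonneg hx₁)
  rw [harg, norm_sub_rev, Complex.norm_exp_I_mul_ofReal_sub_one, hhalf,
    norm_of_nonneg (by positivity)]

lemma prod_Ico_two_mul_sin_pi_mul_div (hn : n ≠ 0) :
    ∏ k ∈ Ico 1 n, (2 * sin (π * (k / n))) = n := by
  obtain ⟨m, rfl⟩ := Nat.exists_eq_succ_of_ne_zero hn
  have hroots := congrArg norm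
    (Complex.isPrimitiveRoot_exp (m + 1) m.succ_ne_zero).prod_one_sub_pow_eq_order
  rw [norm_prod, ← Nat.cast_succ, Complex.norm_natCast] at hroots
  rw [prod_Ico_eq_prod_range]
  refine (prod_congr rfl fun k hk ↦ ?_).trans hroots
  have hkm : ((1 + k : ℕ) : ℝ) ≤ (m + 1 : ℕ) := by
    have := mem_range.1 hk
    exact_mod_cast (by omega : 1 + k ≤ m + 1)
  rw [← norm_one_sub_exp_two_pi_mul_I_mul (by positivity)
    (div_le_one_of_le₀ hkm (by positivity)), ← Complex.exp_nat_mul]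
  congr 3
  push_cast
  ring

lemma sq_prod_Ico_Gamma_div (hn : n ≠ 0) :
    (∏ k ∈ Ico 1 n, Gamma (k / n)) ^ 2 = (2 * π) ^ (n - 1) / n := by
  have hreflect : ∏ k ∈ Ico 1 n, Gamma (k / n) = ∏ k ∈ Ico 1 n, Gamma (1 - k / n) := by
    have h := prod_Ico_reflect (fun k : ℕ ↦ Gamma (k / n)) 1 n.le_succ
    rw [Nat.add_sub_cancel_left, Nat.add_sub_cancel] at h
    rw [← h]
    refine prod_congr rfl fun k hk ↦ ?_
    rw [Nat.cast_sub (mem_Ico.1 hk).2.le, sub_div, div_self (Nat.cast_ne_zero.2 hn)]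
  calc (∏ k ∈ Ico 1 n, Gamma (k / n)) ^ 2
      = ∏ k ∈ Ico 1 n, Gamma (k / n) * Gamma (1 - k / n) := by
        rw [prod_mul_distrib, ← hreflect, sq]
    _ = ∏ k ∈ Ico 1 n, 2 * π / (2 * sin (π * (k / n))) :=
        prod_congr rfl fun k _ ↦ by
          rw [Gamma_mul_Gamma_one_sub, mul_div_mul_left _ _ two_ne_zero]
    _ = (2 * π) ^ (n - 1) / n := by
        rw [prod_div_distrib, prod_Ico_two_mul_sin_pi_mul_div hn, prod_const, Nat.card_Ico]

lemma prod_Ico_Gamma_div (hn : n ≠ 0) :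
    ∏ k ∈ Ico 1 n, Gamma (k / n) = (2 * π) ^ (((n : ℝ) - 1) / 2) / √n := by
  have hnonneg : 0 ≤ ∏ k ∈ Ico 1 n, Gamma (k / n) :=
    prod_nonneg fun k _ ↦ Gamma_nonneg_of_nonneg (by positivity)
  have hsqrt : √((2 * π) ^ (n - 1)) = (2 * π) ^ (((n : ℝ) - 1) / 2) := by
    rw [sqrt_eq_rpow, ← rpow_natCast_mul (by positivity), Nat.cast_pred (Nat.pos_of_ne_zero hn),
      mul_one_div]
  rw [← sqrt_sq hnonneg, sq_prod_Ico_Gamma_div hn, sqrt_div (by positivity), hsqrt]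

/-- The product side of Gauss's multiplication formula, normalised to satisfy the hypotheses of the
Bohr–Mollerup theorem. It generalises Mathlib's `Real.doublingGamma`, which is the case `n = 2`, and
will turn out to be `Γ` itself on the positive reals. -/
noncomputable def multiplicationGamma (n : ℕ) (s : ℝ) : ℝ :=
  (∏ k ∈ range n, Gamma ((s + k) / n)) * n ^ (s - 1 / 2) / (2 * π) ^ (((n : ℝ) - 1) / 2)

lemma prod_Gamma_add_div_pos (hn : n ≠ 0) {s : ℝ} (hs : 0 < s) :
    0 < ∏ k ∈ range n, Gamma ((s + k) / n) :=
  prod_pos fun _ _ ↦ Gamma_pos_of_pos (by positivity)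

lemma multiplicationGamma_pos (hn : n ≠ 0) {s : ℝ} (hs : 0 < s) : 0 < multiplicationGamma n s := by
  have := prod_Gamma_add_div_pos hn hs
  unfold multiplicationGamma
  positivity

lemma multiplicationGamma_one (hn : n ≠ 0) : multiplicationGamma n 1 = 1 := by
  have hprod : ∏ k ∈ range n, Gamma ((1 + k) / n) = ∏ k ∈ Ico 1 n, Gamma (k / n) := by
    obtain ⟨m, rfl⟩ := Nat.exists_eq_succ_of_ne_zero hn
    have hlast : (1 + (m : ℝ)) / (m + 1 : ℕ) = 1 := by
      push_cast
      rw [add_comm, div_self (by positivity)]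
    rw [prod_Ico_eq_prod_range, prod_range_succ, hlast, Gamma_one, mul_one]
    simp only [Nat.add_sub_cancel, Nat.succ_eq_add_one, Nat.cast_add, Nat.cast_one]
  have hsqrt : (n : ℝ) ^ (1 - 1 / 2 : ℝ) = √n := by
    rw [sqrt_eq_rpow]
    norm_num
  rw [multiplicationGamma, hprod, prod_Ico_Gamma_div hn, hsqrt, div_mul_cancel₀ _ (by positivity),
    div_self (by positivity)]

lemma multiplicationGamma_add_one (hn : n ≠ 0) {s : ℝ} (hs : s ≠ 0) :
    multiplicationGamma n (s + 1) = s * multiplicationGamma n s := by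
  have hshift : ∏ k ∈ range n, Gamma ((s + 1 + k) / n) =
      s / n * ∏ k ∈ range n, Gamma ((s + k) / n) := by
    obtain ⟨m, rfl⟩ := Nat.exists_eq_succ_of_ne_zero hn
    have hlast : (s + 1 + m) / (m + 1 : ℕ) = s / (m + 1 : ℕ) + 1 := by
      push_cast
      field
    rw [prod_range_succ, prod_range_succ' (fun k : ℕ ↦ Gamma ((s + k) / (m + 1 : ℕ))), hlast,
      Gamma_add_one (by positivity), Nat.cast_zero, add_zero]
    simp only [Nat.succ_eq_add_one, Nat.cast_add, Nat.cast_one, add_assoc, add_comm (1 : ℝ)]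
    ring
  rw [multiplicationGamma, multiplicationGamma, hshift, add_sub_right_comm,
    rpow_add_one (by positivity)]
  field

lemma log_multiplicationGamma (hn : n ≠ 0) {s : ℝ} (hs : 0 < s) :
    log (multiplicationGamma n s) = ∑ k ∈ range n, log (Gamma ((s + k) / n)) + log n * s +
      (-(1 / 2) * log n - log ((2 * π) ^ (((n : ℝ) - 1) / 2))) := by
  have hprod := prod_Gamma_add_div_pos hn hs
  rw [multiplicationGamma, log_div (by positivity) (by positivity),
    log_mul hprod.ne' (by positivity), log_rpow (by positivity),
    log_prod fun k _ ↦ (Gamma_pos_of_pos (by positivity)).ne']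
  ring

lemma convexOn_log_Gamma_add_div {a b : ℝ} (ha : 0 ≤ a) (hb : 0 < b) :
    ConvexOn ℝ (Set.Ioi 0) fun s ↦ log (Gamma ((s + a) / b)) := by
  refine ⟨convex_Ioi 0, fun x (hx : 0 < x) y (hy : 0 < y) u v hu hv huv ↦ ?_⟩
  have hcomb : (u • x + v • y + a) / b = u • ((x + a) / b) + v • ((y + a) / b) := by
    simp only [smul_eq_mul]
    linear_combination -(a / b) * huv
  simp only [hcomb]
  exact convexOn_log_Gamma.2 (Set.mem_Ioi.2 (by positivity)) (Set.mem_Ioi.2 (by positivity))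
    hu hv huv

lemma convexOn_finset_sum {𝕜 E β ι : Type*} [Semiring 𝕜] [PartialOrder 𝕜] [AddCommMonoid E]
    [AddCommMonoid β] [PartialOrder β] [IsOrderedAddMonoid β] [SMul 𝕜 E] [Module 𝕜 β]
    {s : Set E} (hs : Convex 𝕜 s) {t : Finset ι} {f : ι → E → β}
    (hf : ∀ i ∈ t, ConvexOn 𝕜 s (f i)) : ConvexOn 𝕜 s fun x ↦ ∑ i ∈ t, f i x := by
  simpa only [← Finset.sum_apply] using!
    sum_induction f (ConvexOn 𝕜 s) (fun _ _ ↦ ConvexOn.add) (convexOn_const 0 hs) hf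

lemma convexOn_log_multiplicationGamma (hn : n ≠ 0) :
    ConvexOn ℝ (Set.Ioi 0) (log ∘ multiplicationGamma n) := by
  have hsum : ConvexOn ℝ (Set.Ioi 0) fun s ↦ ∑ k ∈ range n, log (Gamma ((s + k) / n)) :=
    convexOn_finset_sum (convex_Ioi 0) fun k _ ↦
      convexOn_log_Gamma_add_div k.cast_nonneg (by positivity)
  have hlinear : ConvexOn ℝ (Set.Ioi 0) fun s ↦ log n * s :=
    (convexOn_id (convex_Ioi 0)).smul (log_natCast_nonneg n)
  exact ((hsum.add hlinear).add_const _).congr fun s hs ↦ (log_multiplicationGamma hn hs).symm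

lemma multiplicationGamma_eq_Gamma (hn : n ≠ 0) {s : ℝ} (hs : 0 < s) :
    multiplicationGamma n s = Gamma s :=
  eq_Gamma_of_log_convex (convexOn_log_multiplicationGamma hn)
    (fun hy ↦ multiplicationGamma_add_one hn hy.ne') (fun hy ↦ multiplicationGamma_pos hn hy)
    (multiplicationGamma_one hn) hs

theorem prod_range_Gamma_add_div (hn : n ≠ 0) {z : ℝ} (hz : 0 < z) :
    ∏ k ∈ range n, Gamma (z + k / n) =
      (2 * π) ^ (((n : ℝ) - 1) / 2) * n ^ (1 / 2 - n * z) * Gamma (n * z) := by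
  have hterm (k : ℕ) : z + k / n = (n * z + k) / n := by field
  rw [← multiplicationGamma_eq_Gamma hn (by positivity), multiplicationGamma,
    ← neg_sub (n * z) (1 / 2), rpow_neg (by positivity)]
  simp only [hterm]
  field

lemma prod_range_Gamma_sub_succ_div (hn : n ≠ 0) {x : ℝ} (hx : 1 < x) :
    ∏ i ∈ range n, Gamma (x - (i + 1) / n) =
      (2 * π) ^ (((n : ℝ) - 1) / 2) * n ^ (1 / 2 - n * (x - 1)) * Gamma (n * (x - 1)) := by
  rw [← prod_range_Gamma_add_div hn (sub_pos.2 hx), ← prod_range_reflect]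
  refine prod_congr rfl fun i hi ↦ ?_
  have hin := mem_range.1 hi
  have hcast : ((n - 1 - i : ℕ) : ℝ) = n - 1 - i := by
    rw [Nat.cast_sub (by omega), Nat.cast_pred (by omega)]
  rw [hcast]
  congr 1
  field

lemma prod_range_mul_Gamma_sub_succ_div (hn : n ≠ 0) {K : ℕ} {x : ℝ} (hx : K < x) :
    ∏ j ∈ range (n * K), Gamma (x - (j + 1) / n) =
      (2 * π) ^ (K * ((n : ℝ) - 1) / 2) *
        n ^ (K * (1 / 2 - n * x) + n * K * ((K : ℝ) + 1) / 2) *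
        ∏ j ∈ Icc 1 K, Gamma (n * x - n * j) := by
  induction K with
  | zero => simp
  | succ K ih =>
    push_cast at hx
    have hblock : ∏ i ∈ range n, Gamma (x - ((n * K + i : ℕ) + 1) / n) =
        (2 * π) ^ (((n : ℝ) - 1) / 2) * n ^ (1 / 2 - n * (x - K - 1)) *
          Gamma (n * x - n * (K + 1 : ℕ)) := by
      have hterm (i : ℕ) : x - ((n * K + i : ℕ) + 1) / n = x - K - (i + 1) / n := by
        push_cast
        field
      have harg : n * x - n * (K + 1 : ℕ) = n * (x - K - 1) := by
        push_cast
        ring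
      simp only [hterm, harg]
      exact prod_range_Gamma_sub_succ_div hn (by linarith)
    have hpi : (2 * π) ^ ((K + 1 : ℕ) * ((n : ℝ) - 1) / 2) =
        (2 * π) ^ (K * ((n : ℝ) - 1) / 2) * (2 * π) ^ (((n : ℝ) - 1) / 2) := by
      rw [← rpow_add (by positivity)]
      push_cast
      ring_nf
    have hpow : (n : ℝ) ^ ((K + 1 : ℕ) * (1 / 2 - n * x) +
          n * (K + 1 : ℕ) * (((K + 1 : ℕ) : ℝ) + 1) / 2) =
        n ^ (K * (1 / 2 - n * x) + n * K * ((K : ℝ) + 1) / 2) *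
          n ^ (1 / 2 - n * (x - K - 1)) := by
      rw [← rpow_add (by positivity)]
      push_cast
      ring_nf
    rw [mul_add_one, prod_range_add, ih (by linarith), hblock, hpi, hpow,
      prod_Icc_succ_top (by omega)]
    ring

lemma prod_range_Gamma_sub_div_mul (m : ℕ) (a x : ℝ) :
    (∏ j ∈ range m, Gamma (x - j / a)) * Gamma (x - m / a) =
      Gamma x * ∏ j ∈ range m, Gamma (x - (j + 1) / a) := by
  rw [← prod_range_succ (fun j : ℕ ↦ Gamma (x - j / a)), prod_range_succ', mul_comm]
  simp only [Nat.cast_add, Nat.cast_one, Nat.cast_zero, zero_div, sub_zero]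

end GaussMultiplication

/-- For positive integers `q, K` and `0 < t < 1/(qK)`:
`∏_{j=0}^{qK-1} Γ(1/(tq) - j/q)
  = (Γ(1/(tq)) / Γ(1/(tq) - K)) ⬝ (2π)^{K(q-1)/2}
      ⬝ q^{K(1/2 - 1/t) + qK(K+1)/2} ⬝ ∏_{j=1}^{K} Γ(1/t - qj)`. -/
theorem stmt4 (q K : ℕ) (hq : 0 < q) (hK : 0 < K) (t : ℝ)
    (ht : 0 < t) (ht' : t < 1 / (q * K)) :
    ∏ j ∈ Finset.range (q * K), Real.Gamma (1 / (t * q) - (j : ℝ) / q) =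
      Real.Gamma (1 / (t * q)) / Real.Gamma (1 / (t * q) - K) *
        (2 * Real.pi) ^ ((K : ℝ) * ((q : ℝ) - 1) / 2) *
        (q : ℝ) ^ ((K : ℝ) * (1 / 2 - 1 / t) + (q : ℝ) * K * ((K : ℝ) + 1) / 2) *
        ∏ j ∈ Finset.Icc 1 K, Real.Gamma (1 / t - (q : ℝ) * j) := by
  have hq₀ : (0 : ℝ) < q := by exact_mod_cast hq
  have hx : (K : ℝ) < 1 / (t * q) := by
    have hK₀ : (0 : ℝ) < K := by exact_mod_cast hK
    rw [lt_div_iff₀ (by positivity)] at ht' ⊢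
    linarith
  have hqx : 1 / t = q * (1 / (t * q)) := by field
  rw [hqx]
  set x := 1 / (t * q)
  have hexchange := prod_range_Gamma_sub_div_mul (q * K) q x
  rw [Nat.cast_mul, mul_div_cancel_left₀ _ hq₀.ne',
    prod_range_mul_Gamma_sub_succ_div hq.ne' hx] at hexchange
  rw [eq_div_of_mul_eq (Real.Gamma_pos_of_pos (sub_pos.2 hx)).ne' hexchange]
  ring
end
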